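/- Let (u^k, E^k) and (u, E) be admissible pairs, and let p^k, p ∈ L²(Ω; Sym(n)). Assume: (i) u^k → u strongly in L²(ℝⁿ; ℝⁿ); (ii) E^k → E weakly in L²(Ω; Sym(n)); (iii) for every k and every admissible pair (v, F): ∫_Ω p^k·F dx = 0; (iv) p^k → p weakly in L²(Ω; Sym(n)); (v) there is a constant c ≥ 0 such that p^k·E^k ≥ −c a.e. in Ω for all k. Then p^k·E^k → p·E weakly in L¹(Ω), that is, ∫_Ω g (p^k·E^k) dx → ∫_Ω g (p·E) dx for every g ∈ L^∞(Ω). -/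

import Mathlib

/-!
Testing `p·E` against a smooth cut-off `φ` and integrating by parts moves the derivative onto `φ`:
`∫ φ p·E = -∫ p·(∇φ ⊙ u)`. The right-hand side pairs a weakly with a strongly convergent sequence,
so `pᵏ·Eᵏ` converges to `p·E` as a distribution on `Ω`, and the remaining task is to show that it is
uniformly integrable. It suffices to treat the nonnegative functions `pᵏ·Eᵏ + c`.

Approximate `uᵏ` by smooth fields `U`, bounded in `H¹` by Korn's inequality. At a level `l`, chosen
among dyadic levels so that `l²` times the measure of the set `B` where the maximal function of
`|U| + |∇U|` exceeds `l` is small, let `V` be a Lipschitz truncation of `U`: it agrees with `U` off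
`B` and has Lipschitz constant of order `l`. Subtracting the identities obtained by testing with
`φ U` and `φ V` bounds the integral of `φ pᵏ·ε(U)` over `B` by `l |B|^{1/2}` and an `L²` norm of `U`
over `B`, both small, whereas off `B` the field `ε(U)` is bounded by a multiple of `l`. Since the
total masses `∫ (pᵏ·Eᵏ + c) = c|Ω|` are those of the limit, no mass escapes to the boundary of `Ω`
and the cut-off can be removed.
-/

open MeasureTheory Filter Topology

noncomputable section

abbrev RV (n : ℕ) := Fin n → ℝ
abbrev Mat (n : ℕ) := Matrix (Fin n) (Fin n) ℝ
abbrev MField (n : ℕ) := RV n → Mat n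
abbrev VField (n : ℕ) := RV n → RV n

/-- Frobenius inner product of matrices: `P·Q = ∑ᵢⱼ Pᵢⱼ Qᵢⱼ`. -/
def mdot {n : ℕ} (P Q : Mat n) : ℝ := ∑ i, ∑ j, P i j * Q i j

/-- A matrix field takes symmetric values a.e. on `s`. -/
def SymOn {n : ℕ} (E : MField n) (s : Set (RV n)) : Prop :=
  ∀ᵐ x ∂(volume : Measure (RV n)), x ∈ s → ∀ i j, E x i j = E x j i

/-- Matrix field in L² on `s`: componentwise measurable and `|E|²` integrable on `s`. -/
def L2MOn {n : ℕ} (E : MField n) (s : Set (RV n)) : Prop :=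
  (∀ i j, Measurable fun x => E x i j) ∧
    IntegrableOn (fun x => mdot (E x) (E x)) s volume

/-- Vector field in L² on `s`. -/
def L2VOn {n : ℕ} (u : VField n) (s : Set (RV n)) : Prop :=
  (∀ i, Measurable fun x => u x i) ∧
    IntegrableOn (fun x => ∑ i, u x i * u x i) s volume

/-- Scalar function in L∞ on `s`. -/
def LinfROn {n : ℕ} (f : RV n → ℝ) (s : Set (RV n)) : Prop :=
  Measurable f ∧ ∃ M : ℝ, ∀ᵐ x ∂(volume : Measure (RV n)), x ∈ s → |f x| ≤ M

/-- Matrix field in L∞ on `s`. -/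
def LinfMOn {n : ℕ} (F : MField n) (s : Set (RV n)) : Prop :=
  (∀ i j, Measurable fun x => F x i j) ∧
    ∃ M : ℝ, ∀ᵐ x ∂(volume : Measure (RV n)), x ∈ s → ∀ i j, |F x i j| ≤ M

/-- `E` is the weak symmetrized gradient of `u`:
for all `i j` and every test function `φ ∈ C_c^∞(ℝⁿ)`,
`∫ Eᵢⱼ φ = -(1/2) ∫ (uᵢ ∂ⱼφ + uⱼ ∂ᵢφ)`. -/
def IsSymGrad {n : ℕ} (u : VField n) (E : MField n) : Prop :=
  ∀ i j, ∀ φ : RV n → ℝ, ContDiff ℝ (⊤ : ℕ∞) φ → HasCompactSupport φ →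
    ∫ x, E x i j * φ x =
      -(1 / 2) * ∫ x, (u x i * fderiv ℝ φ x (Pi.single j 1) +
        u x j * fderiv ℝ φ x (Pi.single i 1))

/-- Admissible pair: the encoding of `v ∈ H¹₀(Ω;ℝⁿ)` together with its symmetrized
gradient `ε(v)`. -/
structure AdmPair (n : ℕ) (Ω : Set (RV n)) where
  u : VField n
  E : MField n
  hu : L2VOn u Set.univ
  hE : L2MOn E Set.univ
  hsym : SymOn E Set.univ
  huz : ∀ᵐ x ∂(volume : Measure (RV n)), x ∉ Ω → u x = 0
  hEz : ∀ᵐ x ∂(volume : Measure (RV n)), x ∉ Ω → E x = 0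
  hgrad : IsSymGrad u E

/-- Weak convergence in `L²(s; Sym(n))`. -/
def WeakL2M {n : ℕ} (Ek : ℕ → MField n) (E : MField n) (s : Set (RV n)) : Prop :=
  ∀ G : MField n, L2MOn G s →
    Tendsto (fun k => ∫ x in s, mdot (Ek k x) (G x)) atTop
      (𝓝 (∫ x in s, mdot (E x) (G x)))

/-- Weak convergence in `L²(s; ℝⁿ)`. -/
def WeakL2V {n : ℕ} (uk : ℕ → VField n) (u : VField n) (s : Set (RV n)) : Prop :=
  ∀ g : VField n, L2VOn g s →
    Tendsto (fun k => ∫ x in s, ∑ i, uk k x i * g x i) atTop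
      (𝓝 (∫ x in s, ∑ i, u x i * g x i))

/-- Weak* convergence in `L∞(s)`. -/
def WeakStarLinf {n : ℕ} (fk : ℕ → RV n → ℝ) (f : RV n → ℝ) (s : Set (RV n)) : Prop :=
  ∀ h : RV n → ℝ, IntegrableOn h s volume →
    Tendsto (fun k => ∫ x in s, fk k x * h x) atTop (𝓝 (∫ x in s, f x * h x))

/-- Weak convergence in `L¹(s)`. -/
def WeakL1 {n : ℕ} (fk : ℕ → RV n → ℝ) (f : RV n → ℝ) (s : Set (RV n)) : Prop :=
  ∀ g : RV n → ℝ, Measurable g →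
    (∃ M : ℝ, ∀ᵐ x ∂(volume : Measure (RV n)), x ∈ s → |g x| ≤ M) →
    Tendsto (fun k => ∫ x in s, fk k x * g x) atTop (𝓝 (∫ x in s, f x * g x))

/-- Uniform integrability of a family on `s`. -/
def UnifIntOn {n : ℕ} (fk : ℕ → RV n → ℝ) (s : Set (RV n)) : Prop :=
  ∀ ε : ℝ, 0 < ε → ∃ η : ℝ, 0 < η ∧ ∀ A : Set (RV n), MeasurableSet A → A ⊆ s →
    volume A < ENNReal.ofReal η → ∀ k, ∫ x in A, |fk k x| < ε

/-- The double-well integrand `min{½a|F+C|², ½b|F+D|²}`. -/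
def phaseMin {n : ℕ} (a b : RV n → ℝ) (C D : MField n) (F : MField n) (x : RV n) : ℝ :=
  min (1 / 2 * a x * mdot (F x + C x) (F x + C x))
      (1 / 2 * b x * mdot (F x + D x) (F x + D x))

/-- The nonconvex energy. -/
def Jfun {n : ℕ} (Ω : Set (RV n)) (a b : RV n → ℝ) (C D : MField n) (F : MField n) : ℝ :=
  ∫ x in Ω, phaseMin a b C D F x

/-- The infimum `α` of the nonconvex problem over admissible pairs. -/
def alphaInf {n : ℕ} (Ω : Set (RV n)) (a b : RV n → ℝ) (C D : MField n) : ℝ :=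
  sInf { r : ℝ | ∃ P : AdmPair n Ω, r = Jfun Ω a b C D P.E }

/-- The convexified energy `∫ [½χₐa|F+C|² + ½χᵦb|F+D|²]`. -/
def Jconv {n : ℕ} (Ω : Set (RV n)) (χa χb a b : RV n → ℝ) (C D : MField n)
    (F : MField n) : ℝ :=
  ∫ x in Ω, (1 / 2 * χa x * a x * mdot (F x + C x) (F x + C x)
    + 1 / 2 * χb x * b x * mdot (F x + D x) (F x + D x))

/-- `A⁺ = (aC + bD)/2`. -/
def Aplus {n : ℕ} (a b : RV n → ℝ) (C D : MField n) : MField n :=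
  fun x => (2 : ℝ)⁻¹ • (a x • C x + b x • D x)

/-- `A⁻ = (bD − aC)/2`. -/
def Aminus {n : ℕ} (a b : RV n → ℝ) (C D : MField n) : MField n :=
  fun x => (2 : ℝ)⁻¹ • (b x • D x - a x • C x)

/-- The integrand on `Ω \ Ω₀`:
`(ab(C−D)/(b−a))·F + ((bD−aC)/(b−a))·q + ab(|C|²−|D|²)/(2(b−a)) − t·ab|C−D|²/(2(b−a))`. -/
def Goff {n : ℕ} (a b : RV n → ℝ) (C D : MField n) (F q : MField n) (t : RV n → ℝ)
    (x : RV n) : ℝ :=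
  a x * b x / (b x - a x) * mdot (C x - D x) (F x) +
    (b x - a x)⁻¹ * mdot (b x • D x - a x • C x) (q x) +
    a x * b x * (mdot (C x) (C x) - mdot (D x) (D x)) / (2 * (b x - a x)) -
    t x * (a x * b x * mdot (C x - D x) (C x - D x) / (2 * (b x - a x)))

/-- `Ω₀ = {x ∈ Ω : a(x) = b(x)}`. -/
def Omega0 {n : ℕ} (Ω : Set (RV n)) (a b : RV n → ℝ) : Set (RV n) :=
  {x ∈ Ω | a x = b x}

section MaximalFunction

open Metric Module

theorem integrable_max_sub_zero {α : Type*} [MeasurableSpace α] {μ : Measure α} {g : α → ℝ}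
    (hg0 : 0 ≤ g) (hg : Integrable g μ) {l : ℝ} (hl : 0 ≤ l) :
    Integrable (fun z => max (g z - l) 0) μ := by
  refine hg.mono' ((hg.aestronglyMeasurable.sub aestronglyMeasurable_const).sup
    aestronglyMeasurable_const) (ae_of_all _ fun z => ?_)
  rw [Real.norm_of_nonneg (le_max_right _ _)]
  exact max_le (by linarith) (hg0 z)

variable {E : Type*} [NormedAddCommGroup E] [MeasurableSpace E] {μ : Measure E} {g : E → ℝ} {l : ℝ}

/-- The superlevel set `{M g > l}` of the centred Hardy–Littlewood maximal function of `g`. The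
maximal function itself is never needed, so averages are compared with `l` directly, in a form
free of divisions. -/
def maximalSuperlevel (μ : Measure E) (g : E → ℝ) (l : ℝ) : Set E :=
  {x | ∃ r > 0, l * μ.real (closedBall x r) < ∫ z in closedBall x r, g z ∂μ}

theorem setIntegral_closedBall_le_of_notMem {x : E} (hx : x ∉ maximalSuperlevel μ g l) {r : ℝ}
    (hr : 0 < r) : ∫ z in closedBall x r, g z ∂μ ≤ l * μ.real (closedBall x r) :=
  not_lt.1 fun h => hx ⟨r, hr, h⟩

theorem maximalSuperlevel_subset_half [ProperSpace E] [IsFiniteMeasureOnCompacts μ]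
    (hg : Integrable g μ) (hg' : Integrable (fun z => max (g z - l / 2) 0) μ) :
    maximalSuperlevel μ g l ⊆ maximalSuperlevel μ (fun z => max (g z - l / 2) 0) (l / 2) := by
  rintro x ⟨r, hr, hlt⟩
  refine ⟨r, hr, ?_⟩
  have hconst : IntegrableOn (fun _ => l / 2) (closedBall x r) μ :=
    integrableOn_const measure_closedBall_lt_top.ne
  have hsub : ∫ z in closedBall x r, (g z - l / 2) ∂μ ≤
      ∫ z in closedBall x r, max (g z - l / 2) 0 ∂μ :=
    integral_mono (hg.integrableOn.sub hconst) hg'.integrableOn fun z => le_max_left _ _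
  rw [integral_sub hg.integrableOn hconst, setIntegral_const, smul_eq_mul] at hsub
  linarith

theorem measureReal_closedBall_pos [ProperSpace E] [IsFiniteMeasureOnCompacts μ]
    [μ.IsOpenPosMeasure] (x : E) {r : ℝ} (hr : 0 < r) :
    0 < μ.real (closedBall x r) :=
  ENNReal.toReal_pos (measure_closedBall_pos μ x hr).ne' measure_closedBall_lt_top.ne

variable [BorelSpace E] [NormedSpace ℝ E] [FiniteDimensional ℝ E] [μ.IsAddHaarMeasure]

theorem isOpen_maximalSuperlevel (hg0 : 0 ≤ g) (hg : Integrable g μ) :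
    IsOpen (maximalSuperlevel μ g l) := by
  refine isOpen_iff_mem_nhds.2 fun x ⟨r, hr, hlt⟩ => ?_
  have hcont : ContinuousAt (fun t : ℝ => l * (t ^ finrank ℝ E * μ.real (closedBall 0 1))) r := by
    fun_prop
  rw [Measure.addHaar_real_closedBall' μ x hr.le] at hlt
  obtain ⟨δ, hδ, hball⟩ := Metric.eventually_nhds_iff_ball.1 (hcont.eventually (gt_mem_nhds hlt))
  refine mem_of_superset (ball_mem_nhds x (half_pos hδ)) fun y hy => ⟨r + δ / 2, by positivity, ?_⟩
  calc l * μ.real (closedBall y (r + δ / 2))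
      = l * ((r + δ / 2) ^ finrank ℝ E * μ.real (closedBall 0 1)) := by
        rw [Measure.addHaar_real_closedBall' μ y (by positivity)]
    _ < ∫ z in closedBall x r, g z ∂μ :=
        hball _ (by rw [mem_ball, Real.dist_eq, add_sub_cancel_left, abs_of_pos] <;> linarith)
    _ ≤ ∫ z in closedBall y (r + δ / 2), g z ∂μ := by
        refine setIntegral_mono_set hg.integrableOn (ae_of_all _ hg0) (LE.le.eventuallyLE ?_)
        exact closedBall_subset_closedBall' (by linarith [mem_ball'.1 hy])

theorem measure_isCompact_le_of_subset_maximalSuperlevel (hg0 : 0 ≤ g) (hg : Integrable g μ)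
    {K : Set E} (hK : IsCompact K) (hKs : K ⊆ maximalSuperlevel μ g l) (hl : 0 ≤ l) :
    l * μ.real K ≤ 5 ^ finrank ℝ E * ∫ z, g z ∂μ := by
  choose! r hr hlt using fun x (hx : x ∈ K) => hKs hx
  obtain ⟨t, htK, hcover⟩ :=
    hK.elim_nhds_subcover (fun x => closedBall x (r x)) fun x hx => closedBall_mem_nhds x (hr x hx)
  obtain ⟨R, hR⟩ := (t.finite_toSet.image r).bddAbove
  obtain ⟨v, hvt, hdisj, henl⟩ := Vitali.exists_disjoint_subfamily_covering_enlargement_closedBall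
    (t : Set E) id r R (fun x hx => hR ⟨x, hx, rfl⟩) 5 (by norm_num)
  lift v to Finset E using t.finite_toSet.subset hvt
  have hvK : ∀ x ∈ v, x ∈ K := fun x hx => htK x (hvt hx)
  have hKv : K ⊆ ⋃ x ∈ v, closedBall x (5 * r x) := fun y hy => by
    obtain ⟨x, hx, hyx⟩ := Set.mem_iUnion₂.1 (hcover hy)
    obtain ⟨b, hb, hsub⟩ := henl x hx
    exact Set.mem_biUnion hb (hsub hyx)
  calc l * μ.real K
      ≤ l * ∑ x ∈ v, μ.real (closedBall x (5 * r x)) := by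
        gcongr
        exact (measureReal_mono hKv ((measure_biUnion_lt_top v.finite_toSet
          fun _ _ => measure_closedBall_lt_top).ne)).trans (measureReal_biUnion_finset_le v _)
    _ = 5 ^ finrank ℝ E * ∑ x ∈ v, l * μ.real (closedBall x (r x)) := by
        simp only [Finset.mul_sum]
        refine Finset.sum_congr rfl fun x hx => ?_
        have := hr x (hvK x hx)
        rw [Measure.addHaar_real_closedBall' μ x (by positivity),
          Measure.addHaar_real_closedBall' μ x this.le]
        ring
    _ ≤ 5 ^ finrank ℝ E * ∑ x ∈ v, ∫ z in closedBall x (r x), g z ∂μ := by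
        gcongr with x hx
        exact (hlt x (hvK x hx)).le
    _ = 5 ^ finrank ℝ E * ∫ z in ⋃ x ∈ v, closedBall x (r x), g z ∂μ := by
        rw [integral_biUnion_finset v (fun x _ => measurableSet_closedBall) (by exact hdisj)
          fun x _ => hg.integrableOn]
    _ ≤ 5 ^ finrank ℝ E * ∫ z, g z ∂μ := by
        exact mul_le_mul_of_nonneg_left (setIntegral_le_integral hg (ae_of_all _ hg0))
          (by positivity)

theorem measure_maximalSuperlevel_le (hg0 : 0 ≤ g) (hg : Integrable g μ) (hl : 0 < l) :
    μ (maximalSuperlevel μ g l) ≤ ENNReal.ofReal (5 ^ finrank ℝ E * (∫ z, g z ∂μ) / l) := by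
  rw [(isOpen_maximalSuperlevel hg0 hg).measure_eq_iSup_isCompact]
  refine iSup₂_le fun K hKs => iSup_le fun hK => ?_
  rw [← ofReal_measureReal hK.measure_lt_top.ne]
  refine ENNReal.ofReal_le_ofReal ((le_div_iff₀' hl).2 ?_)
  exact measure_isCompact_le_of_subset_maximalSuperlevel hg0 hg hK hKs hl.le

theorem measure_maximalSuperlevel_ne_top (hg0 : 0 ≤ g) (hg : Integrable g μ) (hl : 0 < l) :
    μ (maximalSuperlevel μ g l) ≠ ⊤ :=
  ((measure_maximalSuperlevel_le hg0 hg hl).trans_lt ENNReal.ofReal_lt_top).ne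

/-- Only the part of `g` above `l / 2` can push an average above `l`; this gain over
`measure_maximalSuperlevel_le` is what makes the sum over dyadic levels converge. -/
theorem mul_measureReal_maximalSuperlevel_le (hg0 : 0 ≤ g) (hg : Integrable g μ) (hl : 0 < l) :
    l * μ.real (maximalSuperlevel μ g l) ≤
      2 * 5 ^ finrank ℝ E * ∫ z, max (g z - l / 2) 0 ∂μ := by
  have hg' := integrable_max_sub_zero hg0 hg (half_pos hl).le
  have h : μ.real (maximalSuperlevel μ g l) ≤
      5 ^ finrank ℝ E * (∫ z, max (g z - l / 2) 0 ∂μ) / (l / 2) := by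
    refine ENNReal.toReal_le_of_le_ofReal ?_ ((measure_mono (maximalSuperlevel_subset_half hg
      hg')).trans (measure_maximalSuperlevel_le (fun z => le_max_right _ _) hg' (half_pos hl)))
    have : 0 ≤ ∫ z, max (g z - l / 2) 0 ∂μ := integral_nonneg fun z => le_max_right _ _
    positivity
  rw [le_div_iff₀ (half_pos hl)] at h
  linarith

theorem sum_two_pow_mul_max_sub_le {t : ℝ} (ht : 0 ≤ t) (s J : ℕ) :
    ∑ j ∈ Finset.range J, (2 : ℝ) ^ (s + j) * max (t - 2 ^ (s + j) / 2) 0 ≤ 4 * t ^ 2 := by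
  induction J with
  | zero => simpa using sq_nonneg t
  | succ J ih =>
    rcases le_or_gt (2 * t) (2 ^ (s + J)) with h | h
    · rwa [Finset.sum_range_succ, max_eq_right (by linarith), mul_zero, add_zero]
    have hgeom : ∑ j ∈ Finset.range (J + 1), (2 : ℝ) ^ (s + j) ≤ 2 * 2 ^ (s + J) := by
      simp only [pow_add, ← Finset.mul_sum]
      rw [geom_sum_eq (by norm_num)]
      have : (0 : ℝ) < 2 ^ s := by positivity
      rw [pow_succ]
      nlinarith
    calc ∑ j ∈ Finset.range (J + 1), (2 : ℝ) ^ (s + j) * max (t - 2 ^ (s + j) / 2) 0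
        ≤ ∑ j ∈ Finset.range (J + 1), (2 : ℝ) ^ (s + j) * t := by
          gcongr
          exact max_le (by linarith [pow_pos (zero_lt_two' ℝ) (s + ‹ℕ›)]) ht
      _ = (∑ j ∈ Finset.range (J + 1), (2 : ℝ) ^ (s + j)) * t := by rw [Finset.sum_mul]
      _ ≤ 2 * (2 * t) * t := by gcongr; linarith
      _ = 4 * t ^ 2 := by ring

theorem sum_sq_mul_measureReal_maximalSuperlevel_le (hg0 : 0 ≤ g) (hg : Integrable g μ)
    (hg2 : Integrable (fun z => g z ^ 2) μ) (s J : ℕ) :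
    ∑ j ∈ Finset.range J, ((2 : ℝ) ^ (s + j)) ^ 2 * μ.real (maximalSuperlevel μ g (2 ^ (s + j))) ≤
      8 * 5 ^ finrank ℝ E * ∫ z, g z ^ 2 ∂μ := by
  have hint : ∀ j ∈ Finset.range J, Integrable
      (fun z => (2 : ℝ) ^ (s + j) * max (g z - 2 ^ (s + j) / 2) 0) μ := fun j _ =>
    (integrable_max_sub_zero hg0 hg (l := 2 ^ (s + j) / 2) (by positivity)).const_mul _
  calc ∑ j ∈ Finset.range J,
        ((2 : ℝ) ^ (s + j)) ^ 2 * μ.real (maximalSuperlevel μ g (2 ^ (s + j)))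
      = ∑ j ∈ Finset.range J, (2 : ℝ) ^ (s + j) *
          (2 ^ (s + j) * μ.real (maximalSuperlevel μ g (2 ^ (s + j)))) := by
        simp only [sq, mul_assoc]
    _ ≤ ∑ j ∈ Finset.range J, (2 : ℝ) ^ (s + j) *
          (2 * 5 ^ finrank ℝ E * ∫ z, max (g z - 2 ^ (s + j) / 2) 0 ∂μ) :=
        Finset.sum_le_sum fun j _ => mul_le_mul_of_nonneg_left
          (mul_measureReal_maximalSuperlevel_le hg0 hg (by positivity)) (by positivity)
    _ = 2 * 5 ^ finrank ℝ E *
          ∫ z, ∑ j ∈ Finset.range J, (2 : ℝ) ^ (s + j) * max (g z - 2 ^ (s + j) / 2) 0 ∂μ := by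
        rw [integral_finsetSum _ hint, Finset.mul_sum]
        refine Finset.sum_congr rfl fun j _ => ?_
        rw [integral_const_mul]
        ring
    _ ≤ 2 * 5 ^ finrank ℝ E * ∫ z, 4 * g z ^ 2 ∂μ := by
        exact mul_le_mul_of_nonneg_left (integral_mono (integrable_finsetSum _ hint)
          (hg2.const_mul 4) fun z => sum_two_pow_mul_max_sub_le (hg0 z) s J) (by positivity)
    _ = 8 * 5 ^ finrank ℝ E * ∫ z, g z ^ 2 ∂μ := by rw [integral_const_mul]; ring

/-- Pigeonhole among `J` dyadic levels: this gains the factor `1 / J` over Chebyshev's bound. -/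
theorem exists_level_sq_mul_measureReal_maximalSuperlevel_le (hg0 : 0 ≤ g) (hg : Integrable g μ)
    (hg2 : Integrable (fun z => g z ^ 2) μ) (s : ℕ) {J : ℕ} (hJ : 0 < J) :
    ∃ l : ℝ, 2 ^ s ≤ l ∧ l ≤ 2 ^ (s + J) ∧
      l ^ 2 * μ.real (maximalSuperlevel μ g l) ≤
        8 * 5 ^ finrank ℝ E * (∫ z, g z ^ 2 ∂μ) / J := by
  have : (0 : ℝ) < J := by exact_mod_cast hJ
  obtain ⟨j, hj, hle⟩ := Finset.exists_le_of_sum_le (Finset.nonempty_range_iff.2 hJ.ne')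
    (g := fun _ => 8 * 5 ^ finrank ℝ E * (∫ z, g z ^ 2 ∂μ) / J)
    ((sum_sq_mul_measureReal_maximalSuperlevel_le hg0 hg hg2 s J).trans_eq (by simp; field_simp))
  refine ⟨2 ^ (s + j), ?_, ?_, hle⟩
  · exact pow_le_pow_right₀ one_le_two (Nat.le_add_right s j)
  · exact pow_le_pow_right₀ one_le_two (by have := Finset.mem_range.1 hj; omega)

end MaximalFunction

section LipschitzTruncation

open Metric Module

theorem setIntegral_closedBall_eq_setIntegral_closedBall_zero {E : Type*} [NormedAddCommGroup E]
    [MeasurableSpace E] [BorelSpace E] {μ : Measure E} [μ.IsAddLeftInvariant] {r : ℝ} (f : E → ℝ)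
    (x : E) : ∫ z in closedBall x r, f z ∂μ = ∫ y in closedBall 0 r, f (x + y) ∂μ := by
  rw [← (measurePreserving_add_left μ x).setIntegral_preimage_emb (measurableEmbedding_addLeft x)
    f (closedBall x r), preimage_add_closedBall, sub_self]

variable {E F : Type*} [NormedAddCommGroup E] [NormedSpace ℝ E] [NormedAddCommGroup F]
  [NormedSpace ℝ F] {U : E → F} {g : E → ℝ} {l : ℝ}

theorem norm_add_sub_le_integral_of_norm_fderiv_le (hU : Differentiable ℝ U) (hgc : Continuous g)
    (hUg : ∀ x, ‖fderiv ℝ U x‖ ≤ g x) (x y : E) :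
    ‖U (x + y) - U x‖ ≤ ∫ t in Set.Ioc (0 : ℝ) 1, ‖y‖ * g (x + t • y) := by
  have hderiv : ∀ t : ℝ, HasDerivAt (fun t : ℝ => U (x + t • y)) (fderiv ℝ U (x + t • y) y) t :=
    fun t => (hU _).hasFDerivAt.comp_hasDerivAt t
      (by simpa using ((hasDerivAt_id t).smul_const y).const_add x)
  have hgc' : Continuous fun t : ℝ => ‖y‖ * g (x + t • y) := by fun_prop
  have h := norm_sub_le_integral_of_norm_deriv_le_of_le zero_le_one
    (fun t _ => (hderiv t).continuousAt.continuousWithinAt)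
    (fun t _ => (hderiv t).differentiableAt.differentiableWithinAt)
    (ae_of_all _ fun t _ => ?_) (hgc'.intervalIntegrable 0 1)
  · simpa [intervalIntegral.integral_of_le zero_le_one] using h
  · rw [(hderiv t).deriv, mul_comm]
    exact (ContinuousLinearMap.le_opNorm _ y).trans (by gcongr; exact hUg _)

variable [MeasurableSpace E] [BorelSpace E] [FiniteDimensional ℝ E] {μ : Measure E}
  [μ.IsAddHaarMeasure]

theorem setIntegral_closedBall_comp_homothety_le {x : E} (hx : x ∉ maximalSuperlevel μ g l)
    {r t : ℝ} (hr : 0 < r) (ht : 0 < t) :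
    ∫ y in closedBall 0 r, g (x + t • y) ∂μ ≤ l * μ.real (closedBall 0 r) := by
  have hball := setIntegral_closedBall_le_of_notMem hx (mul_pos ht hr)
  rw [setIntegral_closedBall_eq_setIntegral_closedBall_zero,
    Measure.addHaar_real_closedBall' μ x (by positivity)] at hball
  have hscale := Measure.setIntegral_comp_smul_of_pos μ (fun y => g (x + y)) (closedBall 0 r) ht
  rw [smul_closedBall _ _ hr.le, smul_zero, Real.norm_of_nonneg ht.le, smul_eq_mul] at hscale
  rw [hscale, Measure.addHaar_real_closedBall' μ 0 hr.le, inv_mul_le_iff₀ (by positivity)]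
  exact hball.trans_eq (by ring)

theorem setIntegral_norm_sub_le_of_notMem (hU : Differentiable ℝ U) (hgc : Continuous g)
    (hUg : ∀ x, ‖fderiv ℝ U x‖ ≤ g x) {x : E} (hx : x ∉ maximalSuperlevel μ g l) {r : ℝ}
    (hr : 0 < r) :
    ∫ z in closedBall x r, ‖U z - U x‖ ∂μ ≤ r * (l * μ.real (closedBall x r)) := by
  rw [setIntegral_closedBall_eq_setIntegral_closedBall_zero,
    Measure.addHaar_real_closedBall_center]
  have hcont : Continuous fun q : E × ℝ => r * g (x + q.2 • q.1) := by fun_prop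
  have hint : Integrable (Function.uncurry fun (y : E) (t : ℝ) => r * g (x + t • y))
      ((μ.restrict (closedBall 0 r)).prod (volume.restrict (Set.Ioc 0 1))) := by
    rw [Measure.prod_restrict]
    exact (hcont.continuousOn.integrableOn_compact
      ((isCompact_closedBall _ _).prod isCompact_Icc)).mono_set
        (Set.prod_mono_right Set.Ioc_subset_Icc_self)
  calc ∫ y in closedBall 0 r, ‖U (x + y) - U x‖ ∂μ
      ≤ ∫ y in closedBall 0 r, (∫ t in Set.Ioc (0 : ℝ) 1, r * g (x + t • y)) ∂μ := by
        refine setIntegral_mono_on ?_ hint.integral_prod_left measurableSet_closedBall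
          fun y hy => (norm_add_sub_le_integral_of_norm_fderiv_le hU hgc hUg x y).trans ?_
        · exact ContinuousOn.integrableOn_compact (isCompact_closedBall _ _)
            (by have := hU.continuous; fun_prop)
        · rw [integral_const_mul, integral_const_mul]
          exact mul_le_mul_of_nonneg_right (by simpa using hy)
            (integral_nonneg fun t => (norm_nonneg _).trans (hUg _))
    _ = ∫ t in Set.Ioc (0 : ℝ) 1, ∫ y in closedBall 0 r, r * g (x + t • y) ∂μ :=
        integral_integral_swap hint
    _ ≤ ∫ _ in Set.Ioc (0 : ℝ) 1, r * (l * μ.real (closedBall (0 : E) r)) := by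
        refine setIntegral_mono_on hint.integral_prod_right (integrableOn_const (by simp))
          measurableSet_Ioc fun t ht => ?_
        rw [integral_const_mul]
        exact mul_le_mul_of_nonneg_left (setIntegral_closedBall_comp_homothety_le hx hr ht.1) hr.le
    _ = r * (l * μ.real (closedBall (0 : E) r)) := by simp

/-- The balls of radius `‖x - y‖` around `x` and `y` share the ball of half that radius around the
midpoint, on which `U` is compared with both `U x` and `U y`. -/
theorem norm_sub_le_of_notMem_maximalSuperlevel (hU : Differentiable ℝ U) (hgc : Continuous g)
    (hUg : ∀ x, ‖fderiv ℝ U x‖ ≤ g x) {x y : E} (hx : x ∉ maximalSuperlevel μ g l)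
    (hy : y ∉ maximalSuperlevel μ g l) :
    ‖U x - U y‖ ≤ 2 ^ (finrank ℝ E + 1) * l * ‖x - y‖ := by
  rcases eq_or_ne x y with rfl | hxy
  · simp
  set r := ‖x - y‖ with hr_def
  have hr : 0 < r := norm_pos_iff.2 (sub_ne_zero.2 hxy)
  set m := midpoint ℝ x y
  have hsubx : closedBall m (r / 2) ⊆ closedBall x r := closedBall_subset_closedBall'
    (by rw [dist_midpoint_left, Real.norm_of_nonneg zero_le_two, dist_eq_norm, ← hr_def]; linarith)
  have hsuby : closedBall m (r / 2) ⊆ closedBall y r := closedBall_subset_closedBall'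
    (by rw [dist_midpoint_right, Real.norm_of_nonneg zero_le_two, dist_eq_norm, ← hr_def]; linarith)
  have hint : ∀ w v s, IntegrableOn (fun z => ‖U z - U w‖) (closedBall v s) μ := fun w v s =>
    ContinuousOn.integrableOn_compact (isCompact_closedBall _ _)
      (by have := hU.continuous; fun_prop)
  have hball : ∀ w, μ.real (closedBall w r) = 2 ^ finrank ℝ E * μ.real (closedBall m (r / 2)) := by
    intro w
    rw [Measure.addHaar_real_closedBall' μ w hr.le,
      Measure.addHaar_real_closedBall' μ m (by positivity), div_pow]
    field_simp
  have hmean : ∀ w, w ∉ maximalSuperlevel μ g l → closedBall m (r / 2) ⊆ closedBall w r →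
      ∫ z in closedBall m (r / 2), ‖U z - U w‖ ∂μ ≤ r * (l * μ.real (closedBall w r)) :=
    fun w hw hsub => (setIntegral_mono_set (hint w w r) (ae_of_all _ fun _ => norm_nonneg _)
      hsub.eventuallyLE).trans (setIntegral_norm_sub_le_of_notMem hU hgc hUg hw hr)
  refine le_of_mul_le_mul_left ?_ (measureReal_closedBall_pos (μ := μ) m (half_pos hr))
  calc μ.real (closedBall m (r / 2)) * ‖U x - U y‖
      = ∫ _ in closedBall m (r / 2), ‖U x - U y‖ ∂μ := by simp
    _ ≤ ∫ z in closedBall m (r / 2), (‖U z - U x‖ + ‖U z - U y‖) ∂μ := by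
        refine integral_mono (integrableOn_const measure_closedBall_lt_top.ne)
          ((hint x m _).add (hint y m _)) fun z => ?_
        rw [norm_sub_rev (U z) (U x)]
        exact norm_sub_le_norm_sub_add_norm_sub _ _ _
    _ ≤ r * (l * μ.real (closedBall x r)) + r * (l * μ.real (closedBall y r)) := by
        rw [integral_add (hint x m _) (hint y m _)]
        exact add_le_add (hmean x hx hsubx) (hmean y hy hsuby)
    _ = μ.real (closedBall m (r / 2)) * (2 ^ (finrank ℝ E + 1) * l * r) := by
        rw [hball, hball]; ring

theorem le_of_notMem_maximalSuperlevel (hgc : Continuous g) {x : E}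
    (hx : x ∉ maximalSuperlevel μ g l) : g x ≤ l := by
  by_contra! h
  obtain ⟨m, hlm, hmg⟩ := exists_between h
  obtain ⟨δ, hδ, hball⟩ := nhds_basis_closedBall.eventually_iff.1
    (hgc.continuousAt.eventually_const_lt hmg)
  refine hx ⟨δ, hδ, ?_⟩
  calc l * μ.real (closedBall x δ)
      < m * μ.real (closedBall x δ) := by gcongr; exact measureReal_closedBall_pos x hδ
    _ = ∫ _ in closedBall x δ, m ∂μ := by simp [mul_comm]
    _ ≤ ∫ z in closedBall x δ, g z ∂μ :=
        setIntegral_mono_on (integrableOn_const measure_closedBall_lt_top.ne)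
          (hgc.continuousOn.integrableOn_compact (isCompact_closedBall _ _))
          measurableSet_closedBall fun z hz => (hball hz).le

theorem lipschitzWith_clamp_pi {α ι : Type*} [PseudoMetricSpace α] [Fintype ι] {K : NNReal}
    {V : α → ι → ℝ} (hV : LipschitzWith K V) (a b : ℝ) :
    LipschitzWith K fun x i => max a (min b (V x i)) := by
  refine LipschitzWith.of_dist_le_mul fun x y => (dist_pi_le_iff (by positivity)).2 fun i => ?_
  exact ((((LipschitzWith.eval i).comp hV).const_min b).const_max a).dist_le_mul x y |>.trans_eq
    (by simp)

theorem exists_lipschitz_truncation {ι : Type*} [Fintype ι] {U : E → ι → ℝ}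
    (hU : Differentiable ℝ U) (hgc : Continuous g) (hUg : ∀ x, ‖U x‖ ≤ g x)
    (hUg' : ∀ x, ‖fderiv ℝ U x‖ ≤ g x) (hl : 0 ≤ l) :
    ∃ V : E → ι → ℝ, LipschitzWith (Real.toNNReal (2 ^ (finrank ℝ E + 1) * l)) V ∧
      (∀ x, ‖V x‖ ≤ l) ∧ Set.EqOn V U (maximalSuperlevel μ g l)ᶜ := by
  have hlip : LipschitzOnWith (Real.toNNReal (2 ^ (finrank ℝ E + 1) * l)) U
      (maximalSuperlevel μ g l)ᶜ := LipschitzOnWith.of_dist_le_mul fun x hx y hy => by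
    rw [dist_eq_norm, dist_eq_norm, Real.coe_toNNReal _ (by positivity)]
    exact norm_sub_le_of_notMem_maximalSuperlevel hU hgc hUg' hx hy
  obtain ⟨V, hV, hVU⟩ := hlip.extend_pi
  refine ⟨fun x i => max (-l) (min l (V x i)), lipschitzWith_clamp_pi hV _ _,
    fun x => ?_, fun x hx => ?_⟩
  · refine (pi_norm_le_iff_of_nonneg hl).2 fun i => abs_le.2 ⟨le_max_left _ _, ?_⟩
    exact max_le (by linarith) (min_le_left _ _)
  · have hxl : ∀ i, |U x i| ≤ l := fun i =>
      (norm_le_pi_norm (U x) i).trans ((hUg x).trans (le_of_notMem_maximalSuperlevel hgc hx))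
    funext i
    change max (-l) (min l (V x i)) = U x i
    rw [← hVU hx, min_eq_right (abs_le.1 (hxl i)).2, max_eq_right (abs_le.1 (hxl i)).1]

end LipschitzTruncation

section Locality

theorem ae_fderiv_eq_of_eqOn {E : Type*} [NormedAddCommGroup E] [NormedSpace ℝ E]
    [MeasurableSpace E] [BorelSpace E] [FiniteDimensional ℝ E] (μ : Measure E)
    [μ.IsAddHaarMeasure] {U V : E → E} (hU : ∀ᵐ x ∂μ, DifferentiableAt ℝ U x)
    (hV : ∀ᵐ x ∂μ, DifferentiableAt ℝ V x) {s : Set E} (hs : MeasurableSet s)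
    (hUV : Set.EqOn U V s) : ∀ᵐ x ∂μ, x ∈ s → fderiv ℝ U x = fderiv ℝ V x := by
  set D := {x | DifferentiableAt ℝ (U - V) x}
  have hD : MeasurableSet D := measurableSet_of_differentiableAt ℝ (U - V)
  have hlin : ApproximatesLinearOn (U - V) (0 : E →L[ℝ] E) (s ∩ D) 0 := fun x hx y hy => by
    simp [hUV hx.1, hUV hy.1]
  have hzero := hlin.norm_fderiv_sub_le μ (hs.inter hD) (fderiv ℝ (U - V))
    fun x hx => hx.2.hasFDerivAt.hasFDerivWithinAt
  rw [ae_restrict_iff' (hs.inter hD)] at hzero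
  filter_upwards [hzero, hU, hV] with x hx hUx hVx hxs
  have : fderiv ℝ (U - V) x = 0 := by simpa using hx ⟨hxs, hUx.sub hVx⟩
  rwa [fderiv_sub hUx hVx, sub_eq_zero] at this

end Locality

section SquareIntegrable

variable {n : ℕ} {s t : Set (RV n)} {E F : MField n} {u : VField n}

/-- A matrix as a vector of the Euclidean space of its entries, which turns `mdot` into the inner
product. -/
def matVec : Mat n ≃ₗ[ℝ] EuclideanSpace ℝ (Fin n × Fin n) :=
  (LinearEquiv.curry ℝ ℝ (Fin n) (Fin n)).symm.trans (WithLp.linearEquiv 2 ℝ _).symm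

@[simp]
theorem matVec_apply (P : Mat n) (a : Fin n × Fin n) : matVec P a = P a.1 a.2 := rfl

theorem mdot_eq_inner (P Q : Mat n) : mdot P Q = inner ℝ (matVec P) (matVec Q) := by
  simp [mdot, PiLp.inner_apply, Fintype.sum_prod_type, mul_comm]

theorem mdot_self_eq_norm_sq (P : Mat n) : mdot P P = ‖matVec P‖ ^ 2 := by
  rw [mdot_eq_inner, real_inner_self_eq_norm_sq]

theorem mdot_self_nonneg (P : Mat n) : 0 ≤ mdot P P := by
  rw [mdot_self_eq_norm_sq]; positivity

theorem memLp_matVec_iff {μ : Measure (RV n)} :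
    MemLp (fun x => matVec (E x)) 2 μ ↔ ∀ i j, MemLp (fun x => E x i j) 2 μ := by
  simp [memLp_piLp_iff, Prod.forall]

theorem aestronglyMeasurable_matVec {μ : Measure (RV n)} (hE : ∀ i j, Measurable fun x => E x i j) :
    AEStronglyMeasurable (fun x => matVec (E x)) μ :=
  ((WithLp.measurable_toLp 2 _).comp
    (measurable_pi_lambda _ fun a : Fin n × Fin n => hE a.1 a.2)).aestronglyMeasurable

theorem l2MOn_iff_memLp :
    L2MOn E s ↔ (∀ i j, Measurable fun x => E x i j) ∧
      MemLp (fun x => matVec (E x)) 2 (volume.restrict s) :=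
  and_congr_right fun hE => by
    simp only [memLp_two_iff_integrable_sq_norm (aestronglyMeasurable_matVec hE),
      ← mdot_self_eq_norm_sq, IntegrableOn]

theorem l2MOn_iff_memLp_apply :
    L2MOn E s ↔ (∀ i j, Measurable fun x => E x i j) ∧
      ∀ i j, MemLp (fun x => E x i j) 2 (volume.restrict s) := by
  rw [l2MOn_iff_memLp, memLp_matVec_iff]

theorem l2VOn_iff_memLp :
    L2VOn u s ↔ (∀ i, Measurable fun x => u x i) ∧ MemLp u 2 (volume.restrict s) :=
  and_congr_right fun hu => by
    have hsq : ∀ i x, 0 ≤ u x i * u x i := fun i x => mul_self_nonneg _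
    rw [memLp_pi_iff]
    simp only [fun i => memLp_two_iff_integrable_sq (μ := volume.restrict s)
      (hu i).aestronglyMeasurable, sq]
    refine ⟨fun h i => h.mono' ((hu i).mul (hu i)).aestronglyMeasurable (ae_of_all _ fun x => ?_),
      fun h => integrable_finsetSum _ fun i _ => h i⟩
    rw [Real.norm_of_nonneg (hsq i x)]
    exact Finset.single_le_sum (f := fun i => u x i * u x i) (fun i _ => hsq i x)
      (Finset.mem_univ i)

theorem L2MOn.mono (hE : L2MOn E s) (hts : t ⊆ s) : L2MOn E t :=
  ⟨hE.1, hE.2.mono_set hts⟩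

theorem L2MOn.add (hE : L2MOn E s) (hF : L2MOn F s) : L2MOn (fun x => E x + F x) s := by
  rw [l2MOn_iff_memLp] at *
  refine ⟨fun i j => (hE.1 i j).add (hF.1 i j), ?_⟩
  simp only [map_add]
  exact hE.2.add hF.2

theorem L2MOn.sub (hE : L2MOn E s) (hF : L2MOn F s) : L2MOn (fun x => E x - F x) s := by
  rw [l2MOn_iff_memLp] at *
  refine ⟨fun i j => (hE.1 i j).sub (hF.1 i j), ?_⟩
  simp only [map_sub]
  exact hE.2.sub hF.2

theorem L2MOn.integrableOn_mdot (hE : L2MOn E s) (hF : L2MOn F s) :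
    IntegrableOn (fun x => mdot (E x) (F x)) s := by
  simp only [mdot]
  rw [l2MOn_iff_memLp_apply] at hE hF
  exact integrable_finsetSum _ fun i _ => integrable_finsetSum _ fun j _ =>
    (hE.2 i j).integrable_mul (hF.2 i j)

/-- A square integrable matrix field as an element of the Hilbert space `L²(s)`. -/
def L2MOn.toL2 (hE : L2MOn E s) :
    Lp (EuclideanSpace ℝ (Fin n × Fin n)) 2 (volume.restrict s) :=
  (l2MOn_iff_memLp.1 hE).2.toLp _

theorem L2MOn.coeFn_toL2 (hE : L2MOn E s) :
    hE.toL2 =ᵐ[volume.restrict s] fun x => matVec (E x) :=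
  MemLp.coeFn_toLp _

theorem L2MOn.inner_toL2 (hE : L2MOn E s) (hF : L2MOn F s) :
    inner ℝ hE.toL2 hF.toL2 = ∫ x in s, mdot (E x) (F x) := by
  rw [L2.inner_def]
  refine integral_congr_ae ?_
  filter_upwards [hE.coeFn_toL2, hF.coeFn_toL2] with x hx hx'
  rw [hx, hx', mdot_eq_inner]

theorem L2MOn.toL2_sub (hE : L2MOn E s) (hF : L2MOn F s) :
    (hE.sub hF).toL2 = hE.toL2 - hF.toL2 := by
  simp only [L2MOn.toL2, ← MemLp.toLp_sub]
  congr 1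

theorem L2MOn.exists_toL2_eq (y : Lp (EuclideanSpace ℝ (Fin n × Fin n)) 2 (volume.restrict s)) :
    ∃ (G : MField n) (hG : L2MOn G s), hG.toL2 = y := by
  have hG : L2MOn (fun x => matVec.symm (y x)) s := by
    rw [l2MOn_iff_memLp]
    refine ⟨fun i j => ?_, by simpa using Lp.memLp y⟩
    exact (PiLp.proj (𝕜 := ℝ) 2 (fun _ : Fin n × Fin n => ℝ) (i, j)).measurable.comp
      (Lp.stronglyMeasurable y).measurable
  refine ⟨_, hG, Lp.ext ?_⟩
  filter_upwards [hG.coeFn_toL2] with x hx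
  rw [hx, LinearEquiv.apply_symm_apply]

/-- The `L²(s)` norm of a matrix field, with junk value `0` outside `L²`. -/
def l2Norm (E : MField n) (s : Set (RV n)) : ℝ :=
  √(∫ x in s, mdot (E x) (E x))

theorem l2Norm_nonneg : 0 ≤ l2Norm E s :=
  Real.sqrt_nonneg _

theorem sq_l2Norm : l2Norm E s ^ 2 = ∫ x in s, mdot (E x) (E x) :=
  Real.sq_sqrt (integral_nonneg fun _ => mdot_self_nonneg _)

theorem L2MOn.norm_toL2 (hE : L2MOn E s) : ‖hE.toL2‖ = l2Norm E s := by
  rw [l2Norm, ← hE.inner_toL2 hE, ← norm_eq_sqrt_real_inner]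

theorem L2MOn.abs_integral_mdot_le (hE : L2MOn E s) (hF : L2MOn F s) :
    |∫ x in s, mdot (E x) (F x)| ≤ l2Norm E s * l2Norm F s := by
  rw [← hE.inner_toL2 hF, ← hE.norm_toL2, ← hF.norm_toL2]
  exact abs_real_inner_le_norm _ _

theorem L2MOn.l2Norm_mono (hE : L2MOn E s) (hts : t ⊆ s) : l2Norm E t ≤ l2Norm E s :=
  Real.sqrt_le_sqrt (setIntegral_mono_set hE.2 (ae_of_all _ fun _ => mdot_self_nonneg _)
    hts.eventuallyLE)

theorem L2MOn.abs_setIntegral_mdot_le (hE : L2MOn E s) (hts : t ⊆ s) (hF : L2MOn F t) :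
    |∫ x in t, mdot (E x) (F x)| ≤ l2Norm E s * l2Norm F t :=
  ((hE.mono hts).abs_integral_mdot_le hF).trans
    (mul_le_mul_of_nonneg_right (hE.l2Norm_mono hts) l2Norm_nonneg)

theorem l2Norm_le_mul_sqrt {w : RV n → ℝ} {K : ℝ} (hs : MeasurableSet s) (hK : 0 ≤ K)
    (hw : IntegrableOn (fun x => w x ^ 2) s)
    (h : ∀ᵐ x, x ∈ s → mdot (E x) (E x) ≤ (K * w x) ^ 2) :
    l2Norm E s ≤ K * √(∫ x in s, w x ^ 2) := by
  refine Real.sqrt_le_iff.2 ⟨by positivity, ?_⟩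
  rw [mul_pow, Real.sq_sqrt (integral_nonneg fun _ => sq_nonneg _), ← integral_const_mul]
  refine integral_mono_of_nonneg (ae_of_all _ fun _ => mdot_self_nonneg _) (hw.const_mul _) ?_
  filter_upwards [(ae_restrict_iff' hs).2 h] with x hx
  exact hx.trans_eq (mul_pow _ _ _)

end SquareIntegrable

section WeakConvergence

theorem exists_norm_le_of_forall_tendsto_inner {H : Type*} [NormedAddCommGroup H]
    [InnerProductSpace ℝ H] [CompleteSpace H] {v : ℕ → H} {w : H}
    (hv : ∀ y, Tendsto (fun k => inner ℝ (v k) y) atTop (𝓝 (inner ℝ w y))) :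
    ∃ M, ∀ k, ‖v k‖ ≤ M := by
  obtain ⟨M, hM⟩ := banach_steinhaus (g := fun k => innerSL ℝ (v k)) fun y => by
    obtain ⟨C, hC⟩ := (hv y).norm.bddAbove_range
    exact ⟨C, fun k => hC ⟨k, rfl⟩⟩
  exact ⟨M, fun k => by simpa using hM k⟩

theorem tendsto_inner_of_forall_tendsto_inner {H : Type*} [NormedAddCommGroup H]
    [InnerProductSpace ℝ H] [CompleteSpace H] {v z : ℕ → H} {w y : H}
    (hv : ∀ y, Tendsto (fun k => inner ℝ (v k) y) atTop (𝓝 (inner ℝ w y)))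
    (hz : Tendsto (fun k => ‖z k - y‖) atTop (𝓝 0)) :
    Tendsto (fun k => inner ℝ (v k) (z k)) atTop (𝓝 (inner ℝ w y)) := by
  obtain ⟨M, hM⟩ := exists_norm_le_of_forall_tendsto_inner hv
  have hdiff : Tendsto (fun k => inner ℝ (v k) (z k - y)) atTop (𝓝 0) :=
    squeeze_zero_norm (fun k => (norm_inner_le_norm _ _).trans
      (mul_le_mul_of_nonneg_right (hM k) (norm_nonneg _))) (by simpa using hz.const_mul M)
  simpa [inner_sub_right] using hdiff.add (hv y)

variable {n : ℕ} {s : Set (RV n)} {pk Fk : ℕ → MField n} {p F : MField n}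

theorem WeakL2M.tendsto_inner_toL2 (hw : WeakL2M pk p s) (hpk : ∀ k, L2MOn (pk k) s)
    (hp : L2MOn p s) (y : Lp (EuclideanSpace ℝ (Fin n × Fin n)) 2 (volume.restrict s)) :
    Tendsto (fun k => inner ℝ (hpk k).toL2 y) atTop (𝓝 (inner ℝ hp.toL2 y)) := by
  obtain ⟨G, hG, rfl⟩ := L2MOn.exists_toL2_eq y
  simpa only [L2MOn.inner_toL2] using hw G hG

theorem WeakL2M.exists_l2Norm_le (hw : WeakL2M pk p s) (hpk : ∀ k, L2MOn (pk k) s)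
    (hp : L2MOn p s) : ∃ M, ∀ k, l2Norm (pk k) s ≤ M := by
  simpa only [L2MOn.norm_toL2] using
    exists_norm_le_of_forall_tendsto_inner (hw.tendsto_inner_toL2 hpk hp)

theorem WeakL2M.tendsto_integral_mdot (hw : WeakL2M pk p s) (hpk : ∀ k, L2MOn (pk k) s)
    (hp : L2MOn p s) (hFk : ∀ k, L2MOn (Fk k) s) (hF : L2MOn F s)
    (hlim : Tendsto (fun k => l2Norm (fun x => Fk k x - F x) s) atTop (𝓝 0)) :
    Tendsto (fun k => ∫ x in s, mdot (pk k x) (Fk k x)) atTop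
      (𝓝 (∫ x in s, mdot (p x) (F x))) := by
  have hlim' : Tendsto (fun k => ‖(hFk k).toL2 - hF.toL2‖) atTop (𝓝 0) :=
    hlim.congr fun k => by rw [← L2MOn.toL2_sub, L2MOn.norm_toL2]
  have h := tendsto_inner_of_forall_tendsto_inner (hw.tendsto_inner_toL2 hpk hp) hlim'
  simp only [L2MOn.inner_toL2] at h
  exact h

end WeakConvergence

section SymmetrizedGradient

variable {n : ℕ} {Ω s : Set (RV n)} {u U V : VField n} {E p : MField n} {φ : RV n → ℝ}

/-- The symmetric part of the Jacobian matrix of a linear map. It yields both the symmetrized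
gradient `symPart (fderiv ℝ U x)` of `U` and the symmetrized product `symPart (L.smulRight a)` of a
covector `L` and a vector `a`. -/
def symPart (A : RV n →L[ℝ] RV n) : Mat n :=
  fun i j => (A (Pi.single j 1) i + A (Pi.single i 1) j) / 2

theorem symPart_sub (A B : RV n →L[ℝ] RV n) : symPart (A - B) = symPart A - symPart B := by
  ext i j; simp only [symPart, sub_apply, Pi.sub_apply, Matrix.sub_apply]; ring

theorem symPart_comm (A : RV n →L[ℝ] RV n) (i j : Fin n) : symPart A i j = symPart A j i := by
  simp only [symPart, add_comm]

theorem abs_symPart_apply_le (A : RV n →L[ℝ] RV n) (i j : Fin n) : |symPart A i j| ≤ ‖A‖ := by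
  have hA : ∀ i j, |A (Pi.single j 1) i| ≤ ‖A‖ := fun i j => by
    simpa [Pi.norm_single] using (norm_le_pi_norm (A (Pi.single j 1)) i).trans (A.le_opNorm _)
  rw [symPart, abs_div, abs_two, div_le_iff₀ two_pos, mul_two]
  exact (abs_add_le _ _).trans (add_le_add (hA i j) (hA j i))

theorem mdot_symPart_self_le (A : RV n →L[ℝ] RV n) :
    mdot (symPart A) (symPart A) ≤ (n * ‖A‖) ^ 2 := by
  have hentry : ∀ i j, symPart A i j * symPart A i j ≤ ‖A‖ ^ 2 := fun i j => by
    rw [← sq, sq_le_sq, abs_norm]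
    exact abs_symPart_apply_le A i j
  calc mdot (symPart A) (symPart A) ≤ ∑ _ : Fin n, ∑ _ : Fin n, ‖A‖ ^ 2 :=
        Finset.sum_le_sum fun i _ => Finset.sum_le_sum fun j _ => hentry i j
    _ = (n * ‖A‖) ^ 2 := by simp; ring

theorem measurable_symPart_fderiv (U : VField n) (i j : Fin n) :
    Measurable fun x => symPart (fderiv ℝ U x) i j := by
  have h : ∀ i j, Measurable fun x => fderiv ℝ U x (Pi.single j 1) i := fun i j =>
    (measurable_pi_apply i).comp (measurable_fderiv_apply_const ℝ U _)
  exact ((h i j).add (h j i)).div_const 2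

theorem symPart_smulRight_apply (L : RV n →L[ℝ] ℝ) (a : RV n) (i j : Fin n) :
    symPart (L.smulRight a) i j =
      (L (Pi.single j 1) * a i + L (Pi.single i 1) * a j) / 2 := rfl

theorem L2MOn.univ_of_eq_zero (hE : L2MOn E s) (h : ∀ x ∉ s, E x = 0) : L2MOn E Set.univ :=
  ⟨hE.1, ((integrableOn_iff_integrable_of_support_subset fun x hx => by_contra fun hxs =>
    hx (by simp [h x hxs, mdot])).1 hE.2).integrableOn⟩

theorem L2VOn.univ_of_eq_zero (hu : L2VOn u s) (h : ∀ x ∉ s, u x = 0) : L2VOn u Set.univ :=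
  ⟨hu.1, ((integrableOn_iff_integrable_of_support_subset fun x hx => by_contra fun hxs =>
    hx (by simp [h x hxs])).1 hu.2).integrableOn⟩

theorem L2VOn.memLp_apply (hu : L2VOn u s) (i : Fin n) :
    MemLp (fun x => u x i) 2 (volume.restrict s) :=
  memLp_pi_iff.1 (l2VOn_iff_memLp.1 hu).2 i

theorem L2MOn.memLp_apply (hE : L2MOn E s) (i j : Fin n) :
    MemLp (fun x => E x i j) 2 (volume.restrict s) :=
  (l2MOn_iff_memLp_apply.1 hE).2 i j

theorem memLp_mul_of_hasCompactSupport {μ : Measure (RV n)} {f : RV n → ℝ} (hφ : Continuous φ)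
    (hφc : HasCompactSupport φ) (hf : MemLp f 2 μ) : MemLp (fun x => φ x * f x) 2 μ := by
  obtain ⟨C, hC⟩ := hφc.exists_bound_of_continuous hφ
  refine hf.of_le_mul (c := C) (hφ.aestronglyMeasurable.mul hf.1) (ae_of_all _ fun x => ?_)
  rw [norm_mul]
  exact mul_le_mul_of_nonneg_right (hC x) (norm_nonneg _)

theorem integrable_mul_of_tsupport_subset {f : RV n → ℝ} (hf : MemLp f 2 (volume.restrict Ω))
    (hφ : Continuous φ) (hφc : HasCompactSupport φ) (hφΩ : tsupport φ ⊆ Ω) :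
    Integrable fun x => f x * φ x := by
  refine (integrableOn_iff_integrable_of_support_subset ?_).1
    (hf.integrable_mul (q := 2) (hφ.memLp_of_hasCompactSupport hφc))
  exact (Function.support_mul_subset_right f φ).trans ((subset_tsupport φ).trans hφΩ)

theorem L2VOn.smul_of_hasCompactSupport (hu : L2VOn u s) (hφ : Continuous φ)
    (hφc : HasCompactSupport φ) : L2VOn (fun x => φ x • u x) s :=
  l2VOn_iff_memLp.2 ⟨fun i => hφ.measurable.mul (hu.1 i), memLp_pi_iff.2 fun i =>
    memLp_mul_of_hasCompactSupport hφ hφc (hu.memLp_apply i)⟩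

theorem L2MOn.smul_of_hasCompactSupport (hE : L2MOn E s) (hφ : Continuous φ)
    (hφc : HasCompactSupport φ) : L2MOn (fun x => φ x • E x) s :=
  l2MOn_iff_memLp_apply.2 ⟨fun i j => hφ.measurable.mul (hE.1 i j), fun i j =>
    memLp_mul_of_hasCompactSupport hφ hφc (hE.memLp_apply i j)⟩

theorem L2VOn.symPart_smulRight_fderiv (hu : L2VOn u s) (hφ : ContDiff ℝ (⊤ : ℕ∞) φ)
    (hφc : HasCompactSupport φ) :
    L2MOn (fun x => symPart ((fderiv ℝ φ x).smulRight (u x))) s := by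
  have hφ' : ∀ j, Continuous fun x => fderiv ℝ φ x (Pi.single j 1) := fun j =>
    (hφ.continuous_fderiv (by simp)).clm_apply continuous_const
  have hL2 : ∀ i j, MemLp (fun x => fderiv ℝ φ x (Pi.single j 1) * u x i) 2
      (volume.restrict s) := fun i j =>
    memLp_mul_of_hasCompactSupport (hφ' j) (hφc.fderiv_apply ℝ _) (hu.memLp_apply i)
  simp only [l2MOn_iff_memLp_apply, symPart_smulRight_apply, div_eq_mul_inv]
  exact ⟨fun i j => (((hφ' j).measurable.mul (hu.1 i)).add
    ((hφ' i).measurable.mul (hu.1 j))).mul_const _,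
    fun i j => ((hL2 i j).add (hL2 j i)).mul_const _⟩

theorem fderiv_mul_apply_of_contDiff {ψ : RV n → ℝ} (hφ : ContDiff ℝ (⊤ : ℕ∞) φ)
    (hψ : ContDiff ℝ (⊤ : ℕ∞) ψ) (x v : RV n) :
    fderiv ℝ (fun y => φ y * ψ y) x v = φ x * fderiv ℝ ψ x v + fderiv ℝ φ x v * ψ x := by
  rw [fderiv_fun_mul (hφ.differentiable (by simp) x) (hψ.differentiable (by simp) x)]
  simp [mul_comm]

theorem IsSymGrad.smul (h : IsSymGrad u E) (hu : L2VOn u Ω) (hE : L2MOn E Ω)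
    (hφ : ContDiff ℝ (⊤ : ℕ∞) φ) (hφc : HasCompactSupport φ) (hφΩ : tsupport φ ⊆ Ω) :
    IsSymGrad (fun x => φ x • u x)
      (fun x => φ x • E x + symPart ((fderiv ℝ φ x).smulRight (u x))) := by
  intro i j ψ hψ _
  have hprod := h i j (fun x => φ x * ψ x) (hφ.mul hψ) hφc.mul_right
  have hcont : ∀ {χ : RV n → ℝ} (_ : ContDiff ℝ (⊤ : ℕ∞) χ) b,
      Continuous fun x => fderiv ℝ χ x (Pi.single b 1) := fun hχ b =>
    (hχ.continuous_fderiv (by simp)).clm_apply continuous_const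
  have hE_int : Integrable fun x => E x i j * (φ x * ψ x) :=
    integrable_mul_of_tsupport_subset (hE.memLp_apply i j) (hφ.continuous.mul hψ.continuous)
      hφc.mul_right ((tsupport_mul_subset_left).trans hφΩ)
  have hφ_int : ∀ a b, Integrable fun x => u x a * (fderiv ℝ φ x (Pi.single b 1) * ψ x) :=
    fun a b => integrable_mul_of_tsupport_subset (hu.memLp_apply a)
      ((hcont hφ b).mul hψ.continuous) (hφc.fderiv_apply ℝ _).mul_right
      ((tsupport_mul_subset_left).trans ((tsupport_fderiv_apply_subset ℝ _).trans hφΩ))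
  have hψ_int : ∀ a b, Integrable fun x => u x a * (φ x * fderiv ℝ ψ x (Pi.single b 1)) :=
    fun a b => integrable_mul_of_tsupport_subset (hu.memLp_apply a)
      (hφ.continuous.mul (hcont hψ b)) hφc.mul_right ((tsupport_mul_subset_left).trans hφΩ)
  have hφ_sum : Integrable fun x => u x i * (fderiv ℝ φ x (Pi.single j 1) * ψ x) +
      u x j * (fderiv ℝ φ x (Pi.single i 1) * ψ x) := (hφ_int i j).add (hφ_int j i)
  have hψ_sum : Integrable fun x => u x i * (φ x * fderiv ℝ ψ x (Pi.single j 1)) +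
      u x j * (φ x * fderiv ℝ ψ x (Pi.single i 1)) := (hψ_int i j).add (hψ_int j i)
  simp only [fderiv_mul_apply_of_contDiff hφ hψ, mul_add, add_add_add_comm] at hprod
  rw [integral_add hψ_sum hφ_sum] at hprod
  calc ∫ x, (φ x • E x + symPart ((fderiv ℝ φ x).smulRight (u x))) i j * ψ x
      = ∫ x, (E x i j * (φ x * ψ x) + 1 / 2 * (u x i * (fderiv ℝ φ x (Pi.single j 1) * ψ x) +
          u x j * (fderiv ℝ φ x (Pi.single i 1) * ψ x))) := by
        congr with x
        simp only [Matrix.add_apply, Matrix.smul_apply, smul_eq_mul, symPart_smulRight_apply]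
        ring
    _ = -(1 / 2) * ∫ x, (u x i * (φ x * fderiv ℝ ψ x (Pi.single j 1)) +
          u x j * (φ x * fderiv ℝ ψ x (Pi.single i 1))) := by
        rw [integral_add hE_int (hφ_sum.const_mul _), integral_const_mul, hprod]
        ring
    _ = _ := by
        simp only [Pi.smul_apply, smul_eq_mul]
        congr! 3 with x
        ring

/-- The admissible pair obtained by multiplying a pair `u`, `E = ε(u)`, not necessarily vanishing
outside `Ω`, by a test function. -/
def IsSymGrad.cutoff (h : IsSymGrad u E) (hu : L2VOn u Ω) (hE : L2MOn E Ω)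
    (hsymm : SymOn E Set.univ) (hφ : ContDiff ℝ (⊤ : ℕ∞) φ) (hφc : HasCompactSupport φ)
    (hφΩ : tsupport φ ⊆ Ω) : AdmPair n Ω :=
  have hφ0 : ∀ x ∉ Ω, φ x = 0 := fun x hx => image_eq_zero_of_notMem_tsupport fun h => hx (hφΩ h)
  have hφ0' : ∀ x ∉ Ω, fderiv ℝ φ x = 0 := fun x hx =>
    image_eq_zero_of_notMem_tsupport fun h => hx (hφΩ (tsupport_fderiv_subset ℝ h))
  have hE0 : ∀ x ∉ Ω, φ x • E x + symPart ((fderiv ℝ φ x).smulRight (u x)) = 0 := fun x hx => by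
    ext i j
    simp [hφ0 x hx, hφ0' x hx, symPart]
  { u := fun x => φ x • u x
    E := fun x => φ x • E x + symPart ((fderiv ℝ φ x).smulRight (u x))
    hu := (hu.smul_of_hasCompactSupport hφ.continuous hφc).univ_of_eq_zero
      fun x hx => by simp [hφ0 x hx]
    hE := ((hE.smul_of_hasCompactSupport hφ.continuous hφc).add
      (hu.symPart_smulRight_fderiv hφ hφc)).univ_of_eq_zero hE0
    hsym := by
      filter_upwards [hsymm] with x hx _ i j
      simp only [Matrix.add_apply, Matrix.smul_apply, hx (Set.mem_univ x) i j, symPart_comm _ i j]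
    huz := ae_of_all _ fun x hx => by simp [hφ0 x hx]
    hEz := ae_of_all _ hE0
    hgrad := h.smul hu hE hφ hφc hφΩ }

/-- `p` is orthogonal to the symmetrized gradients of all of `H¹₀(Ω)`, that is, the symmetric part
of `p` is divergence free. -/
def Annihilates (Ω : Set (RV n)) (p : MField n) : Prop :=
  ∀ W : AdmPair n Ω, ∫ x in Ω, mdot (p x) (W.E x) = 0

theorem mdot_add_right (P Q R : Mat n) : mdot P (Q + R) = mdot P Q + mdot P R := by
  simp only [mdot_eq_inner, map_add, inner_add_right]

theorem mdot_sub_right (P Q R : Mat n) : mdot P (Q - R) = mdot P Q - mdot P R := by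
  simp only [mdot_eq_inner, map_sub, inner_sub_right]

theorem mdot_smul_right (c : ℝ) (P Q : Mat n) : mdot P (c • Q) = c * mdot P Q := by
  simp only [mdot_eq_inner, map_smul, real_inner_smul_right]

/-- The div-curl argument: test `div p = 0` with `φ u`. -/
theorem Annihilates.setIntegral_mul_mdot_eq_neg (hp : Annihilates Ω p) (hpL2 : L2MOn p Ω)
    (h : IsSymGrad u E) (hu : L2VOn u Ω) (hE : L2MOn E Ω) (hsymm : SymOn E Set.univ)
    (hφ : ContDiff ℝ (⊤ : ℕ∞) φ) (hφc : HasCompactSupport φ) (hφΩ : tsupport φ ⊆ Ω) :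
    ∫ x in Ω, φ x * mdot (p x) (E x) =
      -∫ x in Ω, mdot (p x) (symPart ((fderiv ℝ φ x).smulRight (u x))) := by
  have hzero := hp (h.cutoff hu hE hsymm hφ hφc hφΩ)
  simp only [IsSymGrad.cutoff, mdot_add_right] at hzero
  rw [integral_add
    (hpL2.integrableOn_mdot (hE.smul_of_hasCompactSupport hφ.continuous hφc))
    (hpL2.integrableOn_mdot (hu.symPart_smulRight_fderiv hφ hφc))] at hzero
  simp only [mdot_smul_right] at hzero
  exact eq_neg_of_add_eq_zero_left hzero

theorem integral_fderiv_apply_mul_eq_neg {G : Type*} [NormedAddCommGroup G] [NormedSpace ℝ G]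
    [FiniteDimensional ℝ G] [MeasurableSpace G] [BorelSpace G] {μ : Measure G}
    [μ.IsAddHaarMeasure] {f ψ : G → ℝ} {C : NNReal} (hf : LipschitzWith C f)
    (hψ : ContDiff ℝ (⊤ : ℕ∞) ψ) (hψc : HasCompactSupport ψ) (v : G) :
    ∫ x, fderiv ℝ f x v * ψ x ∂μ = -∫ x, f x * fderiv ℝ ψ x v ∂μ := by
  obtain ⟨D, hD⟩ := hψ.lipschitzWith_of_hasCompactSupport hψc (by simp)
  have hline := hf.integral_lineDeriv_mul_eq (μ := μ) hD hψc v
  have hψ' : ∀ x, lineDeriv ℝ ψ x (-v) * f x = -(f x * fderiv ℝ ψ x v) := fun x => by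
    rw [(hψ.differentiable (by simp) x).lineDeriv_eq_fderiv, map_neg]; ring
  simp only [hψ', integral_neg] at hline
  rw [← hline]
  refine integral_congr_ae ?_
  filter_upwards [hf.ae_differentiableAt (μ := μ)] with x hx
  rw [hx.lineDeriv_eq_fderiv]

theorem isSymGrad_of_lipschitzWith {C : NNReal} (hV : LipschitzWith C V) :
    IsSymGrad V fun x => symPart (fderiv ℝ V x) := by
  intro i j ψ hψ hψc
  have hVi : ∀ a, LipschitzWith C fun x => V x a := fun a => by
    simpa [Function.comp_def] using (LipschitzWith.eval a).comp hV
  have hint : ∀ a b, Integrable fun x => fderiv ℝ V x (Pi.single b 1) a * ψ x := fun a b =>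
    (hψ.continuous.integrable_of_hasCompactSupport hψc).bdd_mul (c := C)
      ((measurable_pi_apply a).comp (measurable_fderiv_apply_const ℝ V _)).aestronglyMeasurable
      (ae_of_all _ fun x => (norm_le_pi_norm (fderiv ℝ V x (Pi.single b 1)) a).trans <| by
        simpa [Pi.norm_single] using
          (fderiv ℝ V x).le_of_opNorm_le (norm_fderiv_le_of_lipschitz ℝ hV) (Pi.single b 1))
  have hint' : ∀ a b, Integrable fun x => V x a * fderiv ℝ ψ x (Pi.single b 1) := fun a b =>
    ((hVi a).continuous.mul ((hψ.continuous_fderiv (by simp)).clm_apply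
      continuous_const)).integrable_of_hasCompactSupport (hψc.fderiv_apply ℝ _).mul_left
  have hparts : ∀ a b, ∫ x, fderiv ℝ V x (Pi.single b 1) a * ψ x =
      -∫ x, V x a * fderiv ℝ ψ x (Pi.single b 1) := fun a b => by
    rw [← integral_fderiv_apply_mul_eq_neg (hVi a) hψ hψc]
    refine integral_congr_ae ?_
    filter_upwards [hV.ae_differentiableAt] with x hx
    rw [fderiv_apply hx]
    rfl
  simp only [symPart, add_div, add_mul, div_mul_eq_mul_div]
  rw [integral_add ((hint i j).div_const 2) ((hint j i).div_const 2), integral_div, integral_div,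
    hparts, hparts, integral_add (hint' i j) (hint' j i)]
  ring

end SymmetrizedGradient

section Mollification

variable {E : Type*} [NormedAddCommGroup E] [NormedSpace ℝ E] [FiniteDimensional ℝ E]
  [MeasurableSpace E] {μ : Measure E} {b : ContDiffBump (0 : E)} {f g : E → ℝ}

/-- The mollification of `f` by the normalized bump function `b`. -/
def mollify (b : ContDiffBump (0 : E)) (μ : Measure E) (f : E → ℝ) (x : E) : ℝ :=
  ∫ t, f t * b.normed μ (x - t) ∂μ

theorem mollify_eq_convolution :
    mollify b μ f = convolution f (b.normed μ) (ContinuousLinearMap.lsmul ℝ ℝ) μ := by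
  funext x
  rw [convolution_lsmul]
  rfl

variable [BorelSpace E] [μ.IsAddHaarMeasure]

theorem mollify_eq_convolution_swap :
    mollify b μ f = convolution (b.normed μ) f (ContinuousLinearMap.lsmul ℝ ℝ) μ := by
  funext x
  rw [convolution_lsmul_swap]
  simp only [mollify, smul_eq_mul, mul_comm]

theorem integrable_mollify_integrand (hf : LocallyIntegrable f μ) (x : E) :
    Integrable (fun t => f t * b.normed μ (x - t)) μ :=
  b.hasCompactSupport_normed.convolutionExists_right (ContinuousLinearMap.lsmul ℝ ℝ) hf
    b.continuous_normed x

theorem contDiff_mollify (hf : LocallyIntegrable f μ) : ContDiff ℝ (⊤ : ℕ∞) (mollify b μ f) := by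
  rw [mollify_eq_convolution]
  exact b.hasCompactSupport_normed.contDiff_convolution_right _ hf b.contDiff_normed

theorem hasCompactSupport_mollify {s : Set E} (hs : Bornology.IsBounded s)
    (hf : ∀ᵐ x ∂μ, x ∉ s → f x = 0) : HasCompactSupport (mollify b μ f) := by
  have hind : f =ᵐ[μ] s.indicator f := hf.mono fun x hx => by
    by_cases hxs : x ∈ s
    · rw [Set.indicator_of_mem hxs]
    · rw [Set.indicator_of_notMem hxs, hx hxs]
  have hmoll : mollify b μ f = mollify b μ (s.indicator f) := by
    funext x
    exact integral_congr_ae (hind.mul (EventuallyEq.refl _ _))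
  rw [hmoll, mollify_eq_convolution]
  exact HasCompactSupport.convolution _ (.of_support_subset_isCompact hs.isCompact_closure
    (Set.support_indicator_subset.trans subset_closure)) b.hasCompactSupport_normed

theorem fderiv_mollify_apply (hf : LocallyIntegrable f μ) (x v : E) :
    fderiv ℝ (mollify b μ f) x v = ∫ t, f t * fderiv ℝ (b.normed μ) (x - t) v ∂μ := by
  have hη : ContDiff ℝ 1 (b.normed μ) := b.contDiff_normed
  have hderiv := b.hasCompactSupport_normed.hasFDerivAt_convolution_right
    (ContinuousLinearMap.lsmul ℝ ℝ) hf hη x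
  rw [mollify_eq_convolution, hderiv.fderiv, convolution_precompR_apply _ hf
    (b.hasCompactSupport_normed.fderiv ℝ) (hη.continuous_fderiv (by simp)), convolution_lsmul]
  rfl

theorem mollify_sub (hf : LocallyIntegrable f μ) (hg : LocallyIntegrable g μ) :
    mollify b μ (f - g) = mollify b μ f - mollify b μ g := by
  funext x
  simp only [mollify, Pi.sub_apply, sub_mul]
  exact integral_sub (integrable_mollify_integrand hf x) (integrable_mollify_integrand hg x)

theorem sq_mollify_le (hf : MemLp f 2 μ) (x : E) :
    mollify b μ f x ^ 2 ≤ mollify b μ (f ^ 2) x := by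
  set m := mollify b μ f x
  have hint : Integrable (fun t => f t * b.normed μ (x - t)) μ :=
    integrable_mollify_integrand (hf.locallyIntegrable (by norm_num)) x
  have hint2 : Integrable (fun t => f t ^ 2 * b.normed μ (x - t)) μ :=
    integrable_mollify_integrand hf.integrable_sq.locallyIntegrable x
  have hint0 : Integrable (fun t => b.normed μ (x - t)) μ :=
    b.integrable_normed.comp_sub_left x
  have hvar : 0 ≤ ∫ t, (f t ^ 2 * b.normed μ (x - t) - 2 * m * (f t * b.normed μ (x - t)) +
      m ^ 2 * b.normed μ (x - t)) ∂μ :=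
    integral_nonneg fun t => by
      have := mul_nonneg (sq_nonneg (f t - m)) (b.nonneg_normed (μ := μ) (x - t))
      simp only [Pi.zero_apply]
      linarith
  have hint_sub : Integrable (fun t => f t ^ 2 * b.normed μ (x - t) -
      2 * m * (f t * b.normed μ (x - t))) μ := hint2.sub (hint.const_mul _)
  rw [integral_add hint_sub (hint0.const_mul _), integral_sub hint2 (hint.const_mul _),
    integral_const_mul, integral_const_mul,
    integral_sub_left_eq_self (b.normed μ) μ x, b.integral_normed] at hvar
  change 0 ≤ mollify b μ (f ^ 2) x - 2 * m * m + m ^ 2 * 1 at hvar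
  linarith

theorem integrable_sq_mollify (hf : MemLp f 2 μ) : Integrable (mollify b μ f ^ 2) μ := by
  have hsq : Integrable (mollify b μ (f ^ 2)) μ := by
    rw [mollify_eq_convolution]
    exact hf.integrable_sq.integrable_convolution _ b.integrable_normed
  have hcont := (contDiff_mollify (b := b) (hf.locallyIntegrable (by norm_num))).continuous
  refine hsq.mono' (hcont.pow 2).aestronglyMeasurable (ae_of_all _ fun x => ?_)
  rw [Pi.pow_apply, norm_pow, Real.norm_eq_abs, sq_abs]
  exact sq_mollify_le hf x

theorem memLp_mollify (hf : MemLp f 2 μ) : MemLp (mollify b μ f) 2 μ :=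
  (memLp_two_iff_integrable_sq
    (contDiff_mollify (hf.locallyIntegrable (by norm_num))).continuous.aestronglyMeasurable).2
    (integrable_sq_mollify hf)

theorem integral_sq_mollify_le (hf : MemLp f 2 μ) :
    ∫ x, mollify b μ f x ^ 2 ∂μ ≤ ∫ x, f x ^ 2 ∂μ := by
  have hsq : Integrable (f ^ 2) μ := hf.integrable_sq
  calc ∫ x, mollify b μ f x ^ 2 ∂μ ≤ ∫ x, mollify b μ (f ^ 2) x ∂μ := by
        refine integral_mono (integrable_sq_mollify hf) ?_ (sq_mollify_le hf)
        rw [mollify_eq_convolution]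
        exact hsq.integrable_convolution _ b.integrable_normed
    _ = ∫ x, f x ^ 2 ∂μ := by
        rw [mollify_eq_convolution, integral_convolution _ hsq b.integrable_normed,
          b.integral_normed]
        simp

variable {ι : Type*} {l : Filter ι} {b : ι → ContDiffBump (0 : E)}

theorem tendsto_integral_sq_mollify_sub_of_continuous [l.IsCountablyGenerated]
    (hb : Tendsto (fun i => (b i).rOut) l (𝓝 0)) (hg : Continuous g) (hgc : HasCompactSupport g) :
    Tendsto (fun i => ∫ x, (mollify (b i) μ g x - g x) ^ 2 ∂μ) l (𝓝 0) := by
  obtain ⟨M, hM⟩ := hgc.exists_bound_of_continuous hg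
  set K := Metric.cthickening 1 (tsupport g)
  have hK : IsCompact K := IsCompact.cthickening hgc
  have hg0 : ∀ x ∉ K, ∀ y ∈ Metric.closedBall x 1, g y = 0 := fun x hx y hy =>
    image_eq_zero_of_notMem_tsupport fun hyg =>
      hx (Metric.mem_cthickening_of_dist_le x y 1 _ hyg (by rwa [dist_comm]))
  have hbound : ∀ᶠ i in l, ∀ᵐ x ∂μ,
      ‖(mollify (b i) μ g x - g x) ^ 2‖ ≤ K.indicator (fun _ => (2 * M) ^ 2) x := by
    filter_upwards [hb.eventually_le_const one_pos] with i hi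
    refine ae_of_all _ fun x => ?_
    rw [norm_pow, ← dist_eq_norm, mollify_eq_convolution_swap]
    by_cases hx : x ∈ K
    · rw [Set.indicator_of_mem hx]
      gcongr
      refine (b i).dist_normed_convolution_le hg.aestronglyMeasurable fun y _ => ?_
      linarith [dist_le_norm_add_norm (g y) (g x), hM x, hM y]
    · have hdist := (b i).dist_normed_convolution_le (μ := μ) (ε := 0) (x₀ := x)
        hg.aestronglyMeasurable fun y hy => by
          rw [hg0 x hx y (Metric.ball_subset_closedBall.trans
            (Metric.closedBall_subset_closedBall hi) hy), hg0 x hx x (by simp), dist_self]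
      simp [Set.indicator_of_notMem hx, le_antisymm hdist dist_nonneg]
  have hlim : ∀ᵐ x ∂μ, Tendsto (fun i => (mollify (b i) μ g x - g x) ^ 2) l (𝓝 0) :=
    ae_of_all _ fun x => by
      have := ((ContDiffBump.convolution_tendsto_right_of_continuous (μ := μ) hb hg x).sub_const
        (g x)).pow 2
      simpa [← mollify_eq_convolution_swap] using this
  have hmeas : ∀ᶠ i in l, AEStronglyMeasurable (fun x => (mollify (b i) μ g x - g x) ^ 2) μ :=
    .of_forall fun i => (((contDiff_mollify hg.locallyIntegrable).continuous.sub hg).pow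
      2).aestronglyMeasurable
  simpa using tendsto_integral_filter_of_dominated_convergence _ hmeas hbound
    ((integrable_indicator_iff hK.measurableSet).2 (integrableOn_const hK.measure_ne_top)) hlim

theorem integral_sq_mollify_sub_le {b : ContDiffBump (0 : E)} (hf : MemLp f 2 μ)
    (hg : MemLp g 2 μ) : ∫ x, (mollify b μ f x - f x) ^ 2 ∂μ ≤
      3 * (2 * ∫ x, (f x - g x) ^ 2 ∂μ + ∫ x, (mollify b μ g x - g x) ^ 2 ∂μ) := by
  have hfg : Integrable (fun x => (f x - g x) ^ 2) μ := (hf.sub hg).integrable_sq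
  have hmfg : Integrable (fun x => mollify b μ (f - g) x ^ 2) μ :=
    (memLp_mollify (hf.sub hg)).integrable_sq
  have hmg : Integrable (fun x => (mollify b μ g x - g x) ^ 2) μ :=
    ((memLp_mollify hg).sub hg).integrable_sq
  have hsum : Integrable (fun x => mollify b μ (f - g) x ^ 2 + (f x - g x) ^ 2) μ := hmfg.add hfg
  have hsplit : ∀ x, (mollify b μ f x - f x) ^ 2 ≤
      3 * (mollify b μ (f - g) x ^ 2 + (f x - g x) ^ 2 + (mollify b μ g x - g x) ^ 2) :=
    fun x => by
      rw [mollify_sub (hf.locallyIntegrable (by norm_num)) (hg.locallyIntegrable (by norm_num)),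
        Pi.sub_apply]
      set a := mollify b μ f x
      set a' := mollify b μ g x
      linarith [sq_nonneg (a - a' + (f x - g x)), sq_nonneg (a - a' - (a' - g x)),
        sq_nonneg (f x - g x + (a' - g x))]
  calc ∫ x, (mollify b μ f x - f x) ^ 2 ∂μ
      ≤ ∫ x, 3 * (mollify b μ (f - g) x ^ 2 + (f x - g x) ^ 2 +
          (mollify b μ g x - g x) ^ 2) ∂μ :=
        integral_mono ((memLp_mollify hf).sub hf).integrable_sq
          ((hsum.add hmg).const_mul 3) hsplit
    _ = 3 * (∫ x, mollify b μ (f - g) x ^ 2 ∂μ + ∫ x, (f x - g x) ^ 2 ∂μ +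
          ∫ x, (mollify b μ g x - g x) ^ 2 ∂μ) := by
        rw [integral_const_mul, integral_add hsum hmg, integral_add hmfg hfg]
    _ ≤ _ := by
        have := integral_sq_mollify_le (b := b) (hf.sub hg)
        simp only [Pi.sub_apply] at this
        linarith

theorem tendsto_integral_sq_mollify_sub [l.IsCountablyGenerated]
    (hb : Tendsto (fun i => (b i).rOut) l (𝓝 0)) (hf : MemLp f 2 μ) :
    Tendsto (fun i => ∫ x, (mollify (b i) μ f x - f x) ^ 2 ∂μ) l (𝓝 0) := by
  refine tendsto_order.2 ⟨fun a ha => .of_forall fun i => ha.trans_le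
    (integral_nonneg fun x => sq_nonneg _), fun ε hε => ?_⟩
  obtain ⟨g, hgc, hfg, hg, hgL2⟩ := MemLp.exists_hasCompactSupport_integral_rpow_sub_le (p := 2)
    (by norm_num) (by simpa using hf) (show 0 < ε / 12 by positivity)
  simp only [Real.norm_eq_abs, Real.rpow_two, sq_abs] at hfg
  have hlim := tendsto_integral_sq_mollify_sub_of_continuous (μ := μ) hb hg hgc
  filter_upwards [hlim.eventually_lt_const (show 0 < ε / 6 by positivity)] with i hi
  have := integral_sq_mollify_sub_le (b := b i) hf (by simpa using hgL2)
  linarith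

end Mollification

section Korn

theorem fderiv_fderiv_apply_comm {G : Type*} [NormedAddCommGroup G] [NormedSpace ℝ G] {f : G → ℝ}
    (hf : ContDiff ℝ (⊤ : ℕ∞) f) (v w x : G) :
    fderiv ℝ (fun y => fderiv ℝ f y v) x w = fderiv ℝ (fun y => fderiv ℝ f y w) x v := by
  have hf' : DifferentiableAt ℝ (fderiv ℝ f) x :=
    (hf.fderiv_right (m := (⊤ : ℕ∞)) (by simp)).differentiable (by simp) x
  have hsecond : ∀ a b, fderiv ℝ (fun y => fderiv ℝ f y a) x b = fderiv ℝ (fderiv ℝ f) x b a :=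
    fun a b => by
      rw [fderiv_clm_apply hf' (differentiableAt_const a)]
      simp
  rw [hsecond, hsecond]
  refine hf.contDiffAt.isSymmSndFDerivAt ?_ w v
  rw [minSmoothness_of_isRCLikeNormedField]
  exact WithTop.coe_le_coe.2 (le_top : (2 : ℕ∞) ≤ ⊤)

theorem integral_fderiv_apply_mul_fderiv_apply_comm {G : Type*} [NormedAddCommGroup G]
    [NormedSpace ℝ G] [FiniteDimensional ℝ G] [MeasurableSpace G] [BorelSpace G] {μ : Measure G}
    [μ.IsAddHaarMeasure] {f g : G → ℝ} (hf : ContDiff ℝ (⊤ : ℕ∞) f) (hfc : HasCompactSupport f)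
    (hg : ContDiff ℝ (⊤ : ℕ∞) g) (v w : G) :
    ∫ x, fderiv ℝ f x v * fderiv ℝ g x w ∂μ = ∫ x, fderiv ℝ f x w * fderiv ℝ g x v ∂μ := by
  have hsmooth : ∀ {h : G → ℝ} (_ : ContDiff ℝ (⊤ : ℕ∞) h) a,
      ContDiff ℝ (⊤ : ℕ∞) fun x => fderiv ℝ h x a := fun hh a =>
    (hh.fderiv_right (by simp)).clm_apply contDiff_const
  have hint : ∀ {h k : G → ℝ}, Continuous h → HasCompactSupport h → Continuous k →
      Integrable (fun x => h x * k x) μ := fun hh hhc hk =>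
    (hh.mul hk).integrable_of_hasCompactSupport hhc.mul_right
  have hparts : ∀ a b, ∫ x, f x * fderiv ℝ (fun y => fderiv ℝ g y a) x b ∂μ =
      -∫ x, fderiv ℝ f x b * fderiv ℝ g x a ∂μ := fun a b =>
    integral_mul_fderiv_eq_neg_fderiv_mul_of_integrable
      (hint (hsmooth hf b).continuous (hfc.fderiv_apply ℝ b) (hsmooth hg a).continuous)
      (hint hf.continuous hfc (hsmooth (hsmooth hg a) b).continuous)
      (hint hf.continuous hfc (hsmooth hg a).continuous)
      (fun x _ => hf.differentiable (by simp) x)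
      (fun x _ => (hsmooth hg a).differentiable (by simp) x)
  rw [← neg_inj, ← hparts, ← hparts]
  simp only [fderiv_fderiv_apply_comm hg v w]

variable {n : ℕ} {U : VField n}

theorem sq_opNorm_le (A : RV n →L[ℝ] RV n) :
    ‖A‖ ^ 2 ≤ n * ∑ i, ∑ j, A (Pi.single j 1) i ^ 2 := by
  set S := ∑ i, ∑ j, A (Pi.single j 1) i ^ 2
  have hS : ∀ i, (∑ j, |A (Pi.single j 1) i|) ^ 2 ≤ n * S := fun i => by
    calc (∑ j, |A (Pi.single j 1) i|) ^ 2 ≤ n * ∑ j, A (Pi.single j 1) i ^ 2 := by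
          simpa using sq_sum_le_card_mul_sum_sq (s := Finset.univ)
            (f := fun j => |A (Pi.single j 1) i|)
      _ ≤ n * S := by
          gcongr
          exact Finset.single_le_sum (f := fun i => ∑ j, A (Pi.single j 1) i ^ 2)
            (fun _ _ => Finset.sum_nonneg fun _ _ => sq_nonneg _) (Finset.mem_univ i)
  have hS0 : 0 ≤ n * S := by positivity
  refine (Real.le_sqrt (norm_nonneg _) hS0).1 (A.opNorm_le_bound (Real.sqrt_nonneg _) fun v =>
    (pi_norm_le_iff_of_nonneg (by positivity)).2 fun i => ?_)
  have hAv : A v i = ∑ j, v j * A (Pi.single j 1) i := by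
    conv_lhs => rw [pi_eq_sum_univ' v]
    simp
  calc ‖A v i‖ ≤ ∑ j, ‖v‖ * |A (Pi.single j 1) i| := by
        rw [hAv]
        refine (norm_sum_le _ _).trans (Finset.sum_le_sum fun j _ => ?_)
        rw [norm_mul, Real.norm_eq_abs (A _ _)]
        gcongr
        exact norm_le_pi_norm v j
    _ ≤ √(n * S) * ‖v‖ := by
        rw [← Finset.mul_sum, mul_comm]
        gcongr
        exact Real.le_sqrt_of_sq_le (hS i)

theorem two_mul_mdot_symPart_self (A : RV n →L[ℝ] RV n) :
    2 * mdot (symPart A) (symPart A) = ∑ i, ∑ j, A (Pi.single j 1) i ^ 2 +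
      ∑ i, ∑ j, A (Pi.single j 1) i * A (Pi.single i 1) j := by
  have hswap : ∑ i, ∑ j, A (Pi.single i 1) j ^ 2 = ∑ i, ∑ j, A (Pi.single j 1) i ^ 2 :=
    Finset.sum_comm
  have hterm : ∀ i j, 2 * (symPart A i j * symPart A i j) = A (Pi.single j 1) i ^ 2 / 2 +
      A (Pi.single i 1) j ^ 2 / 2 + A (Pi.single j 1) i * A (Pi.single i 1) j := fun i j => by
    simp only [symPart]; ring
  simp only [mdot, Finset.mul_sum, hterm, Finset.sum_add_distrib, ← Finset.sum_div, hswap,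
    add_halves]

/-- Two integrations by parts turn the cross terms `∂ⱼUᵢ ∂ᵢUⱼ` into `∂ᵢUᵢ ∂ⱼUⱼ`, which add up to the
square of the divergence. -/
theorem integral_sum_sq_fderiv_le (hU : ContDiff ℝ (⊤ : ℕ∞) U) (hUc : HasCompactSupport U) :
    ∫ x, ∑ i, ∑ j, fderiv ℝ U x (Pi.single j 1) i ^ 2 ≤
      2 * ∫ x, mdot (symPart (fderiv ℝ U x)) (symPart (fderiv ℝ U x)) := by
  set D : Fin n → Fin n → RV n → ℝ := fun i j x => fderiv ℝ U x (Pi.single j 1) i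
  have hUi : ∀ i, ContDiff ℝ (⊤ : ℕ∞) fun x => U x i := contDiff_pi.1 hU
  have hUic : ∀ i, HasCompactSupport fun x => U x i := fun i =>
    hUc.comp_left (g := fun v : RV n => v i) rfl
  have hD : ∀ i j, D i j = fun x => fderiv ℝ (fun y => U y i) x (Pi.single j 1) := fun i j => by
    funext x
    rw [fderiv_apply (hU.differentiable (by simp) x)]
    rfl
  have hint : ∀ i j k l, Integrable fun x => D i j x * D k l x := fun i j k l => by
    have hcont : ∀ i j, Continuous (D i j) := fun i j => by
      rw [hD]; exact ((hUi i).continuous_fderiv (by simp)).clm_apply continuous_const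
    refine ((hcont i j).mul (hcont k l)).integrable_of_hasCompactSupport ?_
    rw [hD]
    exact ((hUic i).fderiv_apply ℝ _).mul_right
  have hint_sum : ∀ a b c d : Fin n → Fin n → Fin n,
      Integrable fun x => ∑ i, ∑ j, D (a i j) (b i j) x * D (c i j) (d i j) x := fun a b c d =>
    integrable_finsetSum _ fun i _ => integrable_finsetSum _ fun j _ => hint _ _ _ _
  have hcross : ∫ x, ∑ i, ∑ j, D i j x * D j i x = ∫ x, (∑ i, D i i x) ^ 2 := by
    simp only [sq, Finset.sum_mul_sum]
    simp only [integral_finsetSum _ fun i _ => integrable_finsetSum _ fun j _ => hint i j j i,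
      integral_finsetSum _ fun i _ => integrable_finsetSum _ fun j _ => hint i i j j,
      integral_finsetSum _ fun j _ => hint _ _ j _]
    refine Finset.sum_congr rfl fun i _ => Finset.sum_congr rfl fun j _ => ?_
    simp only [hD]
    exact integral_fderiv_apply_mul_fderiv_apply_comm (hUi i) (hUic i) (hUi j) _ _
  have hsq : Integrable fun x => ∑ i, ∑ j, D i j x ^ 2 := by
    simpa only [sq] using hint_sum (fun i _ => i) (fun _ j => j) (fun i _ => i) fun _ j => j
  rw [← integral_const_mul]
  simp only [two_mul_mdot_symPart_self]
  rw [integral_add hsq (hint_sum (fun i _ => i) (fun _ j => j) (fun _ j => j) fun i _ => i),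
    hcross]
  exact le_add_of_nonneg_right (integral_nonneg fun x => sq_nonneg _)

theorem integral_sq_norm_fderiv_le (hU : ContDiff ℝ (⊤ : ℕ∞) U) (hUc : HasCompactSupport U) :
    ∫ x, ‖fderiv ℝ U x‖ ^ 2 ≤
      2 * n * ∫ x, mdot (symPart (fderiv ℝ U x)) (symPart (fderiv ℝ U x)) := by
  have hint : Integrable fun x => ∑ i, ∑ j, fderiv ℝ U x (Pi.single j 1) i ^ 2 := by
    have hcont : Continuous fun A : RV n →L[ℝ] RV n => ∑ i, ∑ j, A (Pi.single j 1) i ^ 2 := by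
      fun_prop
    exact (hcont.comp (hU.continuous_fderiv (by simp))).integrable_of_hasCompactSupport
      ((hUc.fderiv ℝ).comp_left (by simp))
  calc ∫ x, ‖fderiv ℝ U x‖ ^ 2
      ≤ ∫ x, n * ∑ i, ∑ j, fderiv ℝ U x (Pi.single j 1) i ^ 2 :=
        integral_mono_of_nonneg (ae_of_all _ fun _ => sq_nonneg _) (hint.const_mul _)
          (ae_of_all _ fun x => sq_opNorm_le _)
    _ ≤ n * (2 * ∫ x, mdot (symPart (fderiv ℝ U x)) (symPart (fderiv ℝ U x))) := by
        rw [integral_const_mul]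
        gcongr
        exact integral_sum_sq_fderiv_le hU hUc
    _ = _ := by ring

end Korn

section SmoothApproximation

variable {n : ℕ} {Ω : Set (RV n)} {u : VField n} {E : MField n}

theorem IsSymGrad.symPart_fderiv_mollify (h : IsSymGrad u E)
    (hu : ∀ i, LocallyIntegrable fun y => u y i) (b : ContDiffBump (0 : RV n)) (x : RV n)
    (i j : Fin n) :
    symPart (fderiv ℝ (fun y a => mollify b volume (fun z => u z a) y) x) i j =
      mollify b volume (fun y => E y i j) x := by
  set η := b.normed volume
  have hη : ContDiff ℝ (⊤ : ℕ∞) η := b.contDiff_normed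
  have hηc : HasCompactSupport η := b.hasCompactSupport_normed
  have hreflect : ∀ t v, fderiv ℝ (fun s => η (x - s)) t v = -fderiv ℝ η (x - t) v := fun t v => by
    have hcomp := ((hη.differentiable (by simp) (x - t)).hasFDerivAt.comp t
      ((hasFDerivAt_id t).const_sub x)).fderiv
    simp only [Function.comp_def] at hcomp
    simp [hcomp]
  have htest := h i j (fun t => η (x - t)) (hη.comp (contDiff_const.sub contDiff_id))
    (hηc.comp_homeomorph (Homeomorph.subLeft x))
  have hint : ∀ a c, Integrable fun t => u t a * fderiv ℝ η (x - t) (Pi.single c 1) := fun a c =>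
    (hηc.fderiv_apply ℝ _).convolutionExists_right (ContinuousLinearMap.lsmul ℝ ℝ) (hu a)
      ((hη.continuous_fderiv (by simp)).clm_apply continuous_const) x
  have hderiv : ∀ a c, fderiv ℝ (fun y a => mollify b volume (fun z => u z a) y) x
      (Pi.single c 1) a = ∫ t, u t a * fderiv ℝ η (x - t) (Pi.single c 1) := fun a c => by
    rw [← fderiv_mollify_apply (hu a), fderiv_pi fun a =>
      (contDiff_mollify (hu a)).differentiable (by simp) x]
    rfl
  simp only [hreflect, mul_neg, ← neg_add, integral_neg] at htest
  rw [integral_add (hint i j) (hint j i)] at htest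
  rw [symPart, hderiv, hderiv, mollify, htest]
  ring

theorem exists_contDiffBump_tendsto_rOut_zero {G : Type*} [NormedAddCommGroup G] :
    ∃ b : ℕ → ContDiffBump (0 : G), Tendsto (fun k => (b k).rOut) atTop (𝓝 0) :=
  ⟨fun k => ⟨1 / ((k : ℝ) + 1) / 2, 1 / ((k : ℝ) + 1), by positivity, half_lt_self (by positivity)⟩,
    tendsto_one_div_add_atTop_nhds_zero_nat⟩

theorem AdmPair.exists_contDiff_approx (hΩ : Bornology.IsBounded Ω) (W : AdmPair n Ω) {δ : ℝ}
    (hδ : 0 < δ) : ∃ U : VField n, ContDiff ℝ (⊤ : ℕ∞) U ∧ HasCompactSupport U ∧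
      ∫ x, ∑ i, (U x i - W.u x i) ^ 2 < δ ∧
      l2Norm (fun x => symPart (fderiv ℝ U x) - W.E x) Set.univ < δ := by
  obtain ⟨b, hb⟩ := exists_contDiffBump_tendsto_rOut_zero (G := RV n)
  have hu : ∀ i, MemLp (fun x => W.u x i) 2 := fun i => by simpa using W.hu.memLp_apply i
  have hE : ∀ i j, MemLp (fun x => W.E x i j) 2 := fun i j => by simpa using W.hE.memLp_apply i j
  have hu_loc : ∀ i, LocallyIntegrable fun x => W.u x i := fun i =>
    (hu i).locallyIntegrable (by norm_num)
  set U : ℕ → VField n := fun k x i => mollify (b k) volume (fun y => W.u y i) x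
  have hu_lim : Tendsto (fun k => ∫ x, ∑ i, (U k x i - W.u x i) ^ 2) atTop (𝓝 0) := by
    have hint : ∀ k i, Integrable fun x => (U k x i - W.u x i) ^ 2 := fun k i =>
      ((memLp_mollify (hu i)).sub (hu i)).integrable_sq
    simp only [integral_finsetSum _ fun i _ => hint _ i]
    simpa using tendsto_finsetSum _ fun i _ => tendsto_integral_sq_mollify_sub hb (hu i)
  have hE_lim : Tendsto (fun k => l2Norm (fun x => symPart (fderiv ℝ (U k) x) - W.E x) Set.univ)
      atTop (𝓝 0) := by
    have hint : ∀ k i j, Integrable fun x =>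
        (mollify (b k) volume (fun y => W.E y i j) x - W.E x i j) ^ 2 := fun k i j =>
      ((memLp_mollify (hE i j)).sub (hE i j)).integrable_sq
    simp only [l2Norm, mdot, Matrix.sub_apply, U, W.hgrad.symPart_fderiv_mollify hu_loc,
      Measure.restrict_univ, ← sq]
    simp only [integral_finsetSum _ fun i _ => integrable_finsetSum _ fun j _ => hint _ i j,
      integral_finsetSum _ fun j _ => hint _ _ j]
    rw [← Real.sqrt_zero]
    refine (Real.continuous_sqrt.tendsto 0).comp ?_
    simpa using tendsto_finsetSum _ fun i _ => tendsto_finsetSum _ fun j _ =>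
      tendsto_integral_sq_mollify_sub hb (hE i j)
  obtain ⟨k, hku, hkE⟩ :=
    ((hu_lim.eventually_lt_const hδ).and (hE_lim.eventually_lt_const hδ)).exists
  have hUc : ∀ i, HasCompactSupport fun x => U k x i := fun i =>
    hasCompactSupport_mollify hΩ (W.huz.mono fun x hx hxΩ => by rw [hx hxΩ]; rfl)
  refine ⟨U k, contDiff_pi.2 fun i => contDiff_mollify (hu_loc i), ?_, hku, hkE⟩
  refine .of_support_subset_isCompact (isCompact_iUnion fun i => hUc i) fun x hx => ?_
  obtain ⟨i, hi⟩ := Function.ne_iff.1 hx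
  exact Set.mem_iUnion_of_mem i (subset_tsupport _ hi)

end SmoothApproximation

section TruncatedTesting

variable {n : ℕ} {Ω S : Set (RV n)} {U V : VField n} {p : MField n} {φ : RV n → ℝ} {D l : ℝ}

/-- The size `|U| + |∇U|` of the first-order jet of a vector field. The maximal function of this
quantity controls the Lipschitz truncations of `U`. -/
def jetNorm (U : VField n) (x : RV n) : ℝ := ‖U x‖ + ‖fderiv ℝ U x‖

/-- A smooth cut-off function compactly supported in `Ω`, with values between `0` and `1`. -/
structure IsCutoff {G : Type*} [NormedAddCommGroup G] [NormedSpace ℝ G] (φ : G → ℝ) (Ω : Set G) :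
    Prop where
  contDiff : ContDiff ℝ (⊤ : ℕ∞) φ
  hasCompactSupport : HasCompactSupport φ
  tsupport_subset : tsupport φ ⊆ Ω
  mem_Icc : ∀ x, φ x ∈ Set.Icc (0 : ℝ) 1

theorem IsCutoff.abs_le_one {G : Type*} [NormedAddCommGroup G] [NormedSpace ℝ G] {φ : G → ℝ}
    {Ω : Set G} (hφ : IsCutoff φ Ω) (x : G) : |φ x| ≤ 1 :=
  abs_le.2 ⟨by linarith [(hφ.mem_Icc x).1], (hφ.mem_Icc x).2⟩

theorem jetNorm_nonneg (U : VField n) : 0 ≤ jetNorm U := fun _ => by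
  unfold jetNorm; positivity

theorem norm_le_jetNorm (U : VField n) (x : RV n) : ‖U x‖ ≤ jetNorm U x :=
  le_add_of_nonneg_right (norm_nonneg _)

theorem norm_fderiv_le_jetNorm (U : VField n) (x : RV n) : ‖fderiv ℝ U x‖ ≤ jetNorm U x :=
  le_add_of_nonneg_left (norm_nonneg _)

theorem continuous_jetNorm (hU : ContDiff ℝ (⊤ : ℕ∞) U) : Continuous (jetNorm U) :=
  hU.continuous.norm.add (hU.continuous_fderiv (by simp)).norm

theorem hasCompactSupport_jetNorm (hUc : HasCompactSupport U) : HasCompactSupport (jetNorm U) :=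
  hUc.norm.add (hUc.fderiv ℝ).norm

theorem integrable_jetNorm (hU : ContDiff ℝ (⊤ : ℕ∞) U) (hUc : HasCompactSupport U) :
    Integrable (jetNorm U) :=
  (continuous_jetNorm hU).integrable_of_hasCompactSupport (hasCompactSupport_jetNorm hUc)

theorem integrable_sq_jetNorm (hU : ContDiff ℝ (⊤ : ℕ∞) U) (hUc : HasCompactSupport U) :
    Integrable fun x => jetNorm U x ^ 2 :=
  ((continuous_jetNorm hU).memLp_of_hasCompactSupport (hasCompactSupport_jetNorm hUc)).integrable_sq

theorem l2MOn_symPart_fderiv_of_lipschitzWith {C : NNReal} (hV : LipschitzWith C V)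
    (hS : volume S ≠ ⊤) : L2MOn (fun x => symPart (fderiv ℝ V x)) S := by
  have : IsFiniteMeasure (volume.restrict S) := isFiniteMeasure_restrict.2 hS
  refine l2MOn_iff_memLp_apply.2 ⟨measurable_symPart_fderiv V, fun i j =>
    MemLp.of_bound (measurable_symPart_fderiv V i j).aestronglyMeasurable C <|
      ae_of_all _ fun x => ?_⟩
  exact (abs_symPart_apply_le _ i j).trans (norm_fderiv_le_of_lipschitz ℝ hV)

theorem l2VOn_of_continuous (hV : Continuous V) (hS : Bornology.IsBounded S) : L2VOn V S := by
  have hV' : ∀ i, Continuous fun x => V x i := fun i => (continuous_apply i).comp hV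
  refine ⟨fun i => (hV' i).measurable, ?_⟩
  have hsq : Continuous fun x => ∑ i, V x i * V x i :=
    continuous_finsetSum _ fun i _ => (hV' i).mul (hV' i)
  exact (hsq.locallyIntegrable.integrableOn_isCompact hS.isCompact_closure).mono_set subset_closure

theorem symPart_smul (a : ℝ) (A : RV n →L[ℝ] RV n) : symPart (a • A) = a • symPart A := by
  ext i j; simp only [symPart, smul_apply, Pi.smul_apply, Matrix.smul_apply, smul_eq_mul]; ring

theorem symPart_zero : symPart (0 : RV n →L[ℝ] RV n) = 0 := by
  simpa using symPart_smul 0 (0 : RV n →L[ℝ] RV n)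

theorem l2MOn_symPart_smul_fderiv_sub_smulRight {C : NNReal} (hS : Bornology.IsBounded S)
    (hU : Continuous U) (hV : LipschitzWith C V) (hφ : ContDiff ℝ (⊤ : ℕ∞) φ)
    (hφc : HasCompactSupport φ) :
    L2MOn (fun x => symPart (φ x • fderiv ℝ V x - (fderiv ℝ φ x).smulRight (U x - V x))) S := by
  simp only [symPart_sub, symPart_smul]
  exact ((l2MOn_symPart_fderiv_of_lipschitzWith hV
    hS.measure_lt_top.ne).smul_of_hasCompactSupport hφ.continuous hφc).sub
    ((l2VOn_of_continuous (hU.sub hV.continuous) hS).symPart_smulRight_fderiv hφ hφc)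

theorem Annihilates.setIntegral_mul_mdot_add_eq_zero_of_lipschitzWith {C : NNReal}
    (hp : Annihilates Ω p) (hpL2 : L2MOn p Ω) (hΩb : Bornology.IsBounded Ω)
    (hU : LipschitzWith C U) (hφ : ContDiff ℝ (⊤ : ℕ∞) φ) (hφc : HasCompactSupport φ)
    (hφΩ : tsupport φ ⊆ Ω) :
    IntegrableOn (fun x => φ x * mdot (p x) (symPart (fderiv ℝ U x)) +
      mdot (p x) (symPart ((fderiv ℝ φ x).smulRight (U x)))) Ω ∧
    ∫ x in Ω, (φ x * mdot (p x) (symPart (fderiv ℝ U x)) +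
      mdot (p x) (symPart ((fderiv ℝ φ x).smulRight (U x)))) = 0 := by
  have hUL2 : L2VOn U Ω := l2VOn_of_continuous hU.continuous hΩb
  have hEL2 := l2MOn_symPart_fderiv_of_lipschitzWith hU hΩb.measure_lt_top.ne
  have hint₁ := hpL2.integrableOn_mdot (hEL2.smul_of_hasCompactSupport hφ.continuous hφc)
  have hint₂ := hpL2.integrableOn_mdot (hUL2.symPart_smulRight_fderiv hφ hφc)
  simp only [mdot_smul_right] at hint₁
  refine ⟨hint₁.add hint₂, ?_⟩
  rw [integral_add hint₁ hint₂, hp.setIntegral_mul_mdot_eq_neg hpL2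
    (isSymGrad_of_lipschitzWith hU) hUL2 hEL2 (ae_of_all _ fun x _ => symPart_comm _) hφ hφc hφΩ,
    neg_add_cancel]

theorem Annihilates.setIntegral_inter_mul_mdot_eq {B : Set (RV n)} {C C' : NNReal}
    (hp : Annihilates Ω p) (hpL2 : L2MOn p Ω) (hΩ : MeasurableSet Ω) (hΩb : Bornology.IsBounded Ω)
    (hU : LipschitzWith C U) (hV : LipschitzWith C' V) (hB : MeasurableSet B)
    (hVU : Set.EqOn V U Bᶜ) (hφ : ContDiff ℝ (⊤ : ℕ∞) φ) (hφc : HasCompactSupport φ)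
    (hφΩ : tsupport φ ⊆ Ω) :
    ∫ x in Ω ∩ B, φ x * mdot (p x) (symPart (fderiv ℝ U x)) =
      ∫ x in Ω ∩ B, mdot (p x)
        (symPart (φ x • fderiv ℝ V x - (fderiv ℝ φ x).smulRight (U x - V x))) := by
  have hW : LipschitzWith (C + C') fun x => U x - V x := hU.sub hV
  obtain ⟨hFint, hFzero⟩ :=
    hp.setIntegral_mul_mdot_add_eq_zero_of_lipschitzWith hpL2 hΩb hW hφ hφc hφΩ
  have hoff : ∀ᵐ x, x ∈ Ω \ (Ω ∩ B) → φ x * mdot (p x) (symPart (fderiv ℝ (fun x => U x - V x) x))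
      + mdot (p x) (symPart ((fderiv ℝ φ x).smulRight (U x - V x))) = 0 := by
    filter_upwards [ae_fderiv_eq_of_eqOn volume hW.ae_differentiableAt
      (ae_of_all _ fun x => differentiableAt_const (0 : RV n)) hB.compl
      fun x hx => sub_eq_zero.2 (hVU hx).symm] with x hx hxB
    have hxB : x ∈ Bᶜ := fun h => hxB.2 ⟨hxB.1, h⟩
    have hmat : mdot (p x) 0 = 0 := by simp [mdot]
    have hsmul : (fderiv ℝ φ x).smulRight (0 : RV n) = 0 := by ext; simp
    rw [hx hxB, hVU hxB, sub_self, hsmul]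
    simp [symPart_zero, hmat]
  rw [setIntegral_eq_of_subset_of_ae_sdiff_eq_zero hΩ.nullMeasurableSet Set.inter_subset_left hoff]
    at hFzero
  have hGint := hpL2.integrableOn_mdot
    (l2MOn_symPart_smul_fderiv_sub_smulRight hΩb hU.continuous hV hφ hφc)
  rw [← zero_add (∫ x in Ω ∩ B, mdot _ (symPart (_ - _))), ← hFzero,
    ← integral_add (hFint.mono_set Set.inter_subset_left) (hGint.mono_set Set.inter_subset_left)]
  refine integral_congr_ae (ae_restrict_of_ae ?_)
  filter_upwards [hU.ae_differentiableAt, hV.ae_differentiableAt] with x hUx hVx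
  rw [fderiv_fun_sub hUx hVx]
  simp only [symPart_sub, symPart_smul, mdot_sub_right, mdot_smul_right]
  ring

theorem norm_smul_sub_smulRight_le {a d : ℝ} {L : RV n →L[ℝ] ℝ} {A : RV n →L[ℝ] RV n}
    {v w : RV n} (ha : |a| ≤ 1) (hL : ‖L‖ ≤ D) (hA : ‖A‖ ≤ d * l) (hd : 0 ≤ d) (hw : ‖w‖ ≤ l) :
    ‖a • A - L.smulRight (v - w)‖ ≤ (d + D) * (l + ‖v‖) := by
  have hD : 0 ≤ D := (norm_nonneg L).trans hL
  have hvw : ‖v - w‖ ≤ l + ‖v‖ := (norm_sub_le v w).trans (by linarith)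
  calc ‖a • A - L.smulRight (v - w)‖ ≤ |a| * ‖A‖ + ‖L‖ * ‖v - w‖ := by
        simpa [norm_smul, ContinuousLinearMap.norm_smulRight_apply] using
          norm_sub_le (a • A) (L.smulRight (v - w))
    _ ≤ 1 * (d * (l + ‖v‖)) + D * (l + ‖v‖) := by
        have : d * l ≤ d * (l + ‖v‖) := by gcongr; simp
        gcongr
        exact hA.trans this
    _ = (d + D) * (l + ‖v‖) := by ring

theorem integrableOn_sq_add_norm (hS : Bornology.IsBounded S) (hU : Continuous U) (l : ℝ) :
    IntegrableOn (fun x => (l + ‖U x‖) ^ 2) S :=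
  (((continuous_const.add hU.norm).pow 2).locallyIntegrable.integrableOn_isCompact
    hS.isCompact_closure).mono_set subset_closure

theorem Annihilates.abs_setIntegral_inter_maximalSuperlevel_le (hp : Annihilates Ω p)
    (hpL2 : L2MOn p Ω) (hΩ : MeasurableSet Ω) (hΩb : Bornology.IsBounded Ω)
    (hU : ContDiff ℝ (⊤ : ℕ∞) U) (hUc : HasCompactSupport U) (hφ : IsCutoff φ Ω)
    (hφD : ∀ x, ‖fderiv ℝ φ x‖ ≤ D) (hl : 0 ≤ l) :
    |∫ x in Ω ∩ maximalSuperlevel volume (jetNorm U) l,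
        φ x * mdot (p x) (symPart (fderiv ℝ U x))| ≤
      l2Norm p Ω * (n * (2 ^ (n + 1) + D) *
        √(∫ x in Ω ∩ maximalSuperlevel volume (jetNorm U) l, (l + ‖U x‖) ^ 2)) := by
  have hB : MeasurableSet (maximalSuperlevel volume (jetNorm U) l) :=
    (isOpen_maximalSuperlevel (jetNorm_nonneg U) (integrable_jetNorm hU hUc)).measurableSet
  obtain ⟨V, hVlip, hVl, hVU⟩ := exists_lipschitz_truncation (μ := volume)
    (hU.differentiable (by simp)) (continuous_jetNorm hU) (norm_le_jetNorm U)
    (norm_fderiv_le_jetNorm U) hl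
  obtain ⟨C, hUlip⟩ := hU.lipschitzWith_of_hasCompactSupport hUc (by simp)
  have hD : 0 ≤ D := (norm_nonneg _).trans (hφD 0)
  have hnormV : ∀ x, ‖fderiv ℝ V x‖ ≤ 2 ^ (n + 1) * l := fun x => by
    simpa [show 0 ≤ 2 ^ (n + 1) * l by positivity] using
      norm_fderiv_le_of_lipschitz ℝ hVlip (x₀ := x)
  have hbound := fun x => norm_smul_sub_smulRight_le (v := U x) (hφ.abs_le_one x) (hφD x) (hnormV x)
    (by positivity) (hVl x)
  rw [hp.setIntegral_inter_mul_mdot_eq hpL2 hΩ hΩb hUlip hVlip hB hVU hφ.contDiff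
    hφ.hasCompactSupport hφ.tsupport_subset]
  have hsub : Ω ∩ maximalSuperlevel volume (jetNorm U) l ⊆ Ω := Set.inter_subset_left
  refine (hpL2.abs_setIntegral_mdot_le hsub <| (l2MOn_symPart_smul_fderiv_sub_smulRight hΩb
    hU.continuous hVlip hφ.contDiff hφ.hasCompactSupport).mono hsub).trans ?_
  refine mul_le_mul_of_nonneg_left ?_ l2Norm_nonneg
  refine l2Norm_le_mul_sqrt (hΩ.inter hB) (by positivity)
    (integrableOn_sq_add_norm (hΩb.subset hsub) hU.continuous l) (ae_of_all _ fun x _ => ?_)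
  refine (mdot_symPart_self_le _).trans ?_
  rw [mul_assoc]
  gcongr
  exact hbound x

end TruncatedTesting

section LevelSetTesting

variable {n : ℕ} {Ω A S : Set (RV n)} {U : VField n} {E F p : MField n} {φ : RV n → ℝ}
  {c D l : ℝ}

theorem L2MOn.l2Norm_smul_le (hE : L2MOn E S) (hφ1 : ∀ x, |φ x| ≤ 1) :
    l2Norm (fun x => φ x • E x) S ≤ l2Norm E S := by
  refine Real.sqrt_le_sqrt (integral_mono_of_nonneg (ae_of_all _ fun _ => mdot_self_nonneg _) hE.2
    (ae_of_all _ fun x => ?_))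
  have hφ2 : φ x ^ 2 ≤ 1 := (sq_le_one_iff_abs_le_one _).2 (hφ1 x)
  simpa [mdot_self_eq_norm_sq, norm_smul, mul_pow] using
    mul_le_of_le_one_left (sq_nonneg ‖matVec (E x)‖) hφ2

theorem L2MOn.abs_setIntegral_mul_mdot_le (hp : L2MOn p Ω) (hS : S ⊆ Ω) (hE : L2MOn E S)
    (hφ : Continuous φ) (hφc : HasCompactSupport φ) (hφ1 : ∀ x, |φ x| ≤ 1) :
    |∫ x in S, φ x * mdot (p x) (E x)| ≤ l2Norm p Ω * l2Norm E S := by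
  simp only [← mdot_smul_right]
  exact (hp.abs_setIntegral_mdot_le hS (hE.smul_of_hasCompactSupport hφ hφc)).trans
    (mul_le_mul_of_nonneg_left (hE.l2Norm_smul_le hφ1) l2Norm_nonneg)

theorem L2MOn.integrableOn_mul_mdot (hp : L2MOn p S) (hE : L2MOn E S) (hφ : Continuous φ)
    (hφc : HasCompactSupport φ) : IntegrableOn (fun x => φ x * mdot (p x) (E x)) S := by
  simp only [← mdot_smul_right]
  exact hp.integrableOn_mdot (hE.smul_of_hasCompactSupport hφ hφc)

theorem L2MOn.integrableOn_mul_mdot_add (hp : L2MOn p S) (hE : L2MOn E S) (hφ : Continuous φ)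
    (hφc : HasCompactSupport φ) : IntegrableOn (fun x => φ x * (mdot (p x) (E x) + c)) S := by
  simp only [mul_add]
  exact (hp.integrableOn_mul_mdot hE hφ hφc).add
    ((hφ.integrable_of_hasCompactSupport hφc).mul_const c).integrableOn

theorem L2MOn.setIntegral_mul_mdot_add_le (hp : L2MOn p Ω) (hE : L2MOn E Ω) (hF : L2MOn F Ω)
    (hS : S ⊆ Ω) (hSfin : volume S ≠ ⊤) (hφ : IsCutoff φ Ω) (hc : 0 ≤ c) :
    ∫ x in S, φ x * (mdot (p x) (E x) + c) ≤
      |∫ x in S, φ x * mdot (p x) (F x)| + l2Norm p Ω * l2Norm (fun x => F x - E x) Ω +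
        c * volume.real S := by
  have hφ' := hφ.contDiff.continuous
  have hφc := hφ.hasCompactSupport
  have hFE : L2MOn (fun x => F x - E x) Ω := hF.sub hE
  have hpS := hp.mono hS
  have hdiff : |∫ x in S, φ x * mdot (p x) (F x - E x)| ≤
      l2Norm p Ω * l2Norm (fun x => F x - E x) Ω :=
    (hp.abs_setIntegral_mul_mdot_le hS (hFE.mono hS) hφ' hφc hφ.abs_le_one).trans
      (mul_le_mul_of_nonneg_left (hFE.l2Norm_mono hS) l2Norm_nonneg)
  have hmass_int : IntegrableOn (fun x => φ x * c) S :=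
    ((hφ'.integrable_of_hasCompactSupport hφc).mul_const c).integrableOn
  have hmass : ∫ x in S, φ x * c ≤ c * volume.real S := by
    rw [mul_comm, ← smul_eq_mul, ← setIntegral_const]
    exact setIntegral_mono hmass_int (integrableOn_const hSfin) fun x =>
      mul_le_of_le_one_left hc (hφ.mem_Icc x).2
  have hF_int := hpS.integrableOn_mul_mdot (hF.mono hS) hφ' hφc
  have hFE_int := hpS.integrableOn_mul_mdot (hFE.mono hS) hφ' hφc
  have hdiff_int : IntegrableOn
      (fun x => φ x * mdot (p x) (F x) - φ x * mdot (p x) (F x - E x)) S := hF_int.sub hFE_int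
  have hsplit : ∫ x in S, φ x * (mdot (p x) (E x) + c) =
      (∫ x in S, φ x * mdot (p x) (F x)) - (∫ x in S, φ x * mdot (p x) (F x - E x)) +
        ∫ x in S, φ x * c := by
    rw [← integral_sub hF_int hFE_int, ← integral_add hdiff_int hmass_int]
    congr with x
    rw [mdot_sub_right]
    ring
  rw [hsplit]
  linarith [le_abs_self (∫ x in S, φ x * mdot (p x) (F x)),
    neg_abs_le (∫ x in S, φ x * mdot (p x) (F x - E x))]

theorem l2MOn_symPart_fderiv_of_contDiff (hU : ContDiff ℝ (⊤ : ℕ∞) U)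
    (hUc : HasCompactSupport U) : L2MOn (fun x => symPart (fderiv ℝ U x)) S := by
  obtain ⟨_, hlip⟩ := hU.lipschitzWith_of_hasCompactSupport hUc (by simp)
  have hsupp : L2MOn (fun x => symPart (fderiv ℝ U x)) (tsupport U) :=
    l2MOn_symPart_fderiv_of_lipschitzWith hlip hUc.measure_lt_top.ne
  exact (hsupp.univ_of_eq_zero fun x hx => by
    rw [fderiv_of_notMem_tsupport ℝ hx, symPart_zero]).mono (Set.subset_univ S)

theorem L2MOn.abs_setIntegral_mul_mdot_symPart_fderiv_le (hp : L2MOn p Ω) (hS : MeasurableSet S)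
    (hSΩ : S ⊆ Ω) (hSfin : volume S ≠ ⊤) (hU : ContDiff ℝ (⊤ : ℕ∞) U) (hUc : HasCompactSupport U)
    (hφ : IsCutoff φ Ω) (hl : 0 ≤ l) (hUl : ∀ x ∈ S, ‖fderiv ℝ U x‖ ≤ l) :
    |∫ x in S, φ x * mdot (p x) (symPart (fderiv ℝ U x))| ≤
      l2Norm p Ω * (n * l * √(volume.real S)) := by
  refine (hp.abs_setIntegral_mul_mdot_le hSΩ (l2MOn_symPart_fderiv_of_contDiff hU hUc)
    hφ.contDiff.continuous hφ.hasCompactSupport hφ.abs_le_one).trans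
    (mul_le_mul_of_nonneg_left ?_ l2Norm_nonneg)
  have hle := l2Norm_le_mul_sqrt (E := fun x => symPart (fderiv ℝ U x)) (w := fun _ => 1)
    (K := n * l) hS (by positivity) (integrableOn_const hSfin) <| ae_of_all _ fun x hx => by
      refine (mdot_symPart_self_le _).trans ?_
      rw [mul_one]
      gcongr
      exact hUl x hx
  simpa using hle

theorem setIntegral_le_setIntegral_inter_add_setIntegral_sdiff {α : Type*} [MeasurableSpace α]
    {μ : Measure α} {s t A : Set α} {f : α → ℝ} (hs : MeasurableSet s) (ht : MeasurableSet t)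
    (hA : A ⊆ s) (hf : IntegrableOn f s μ) (hf0 : ∀ᵐ x ∂μ, x ∈ s → 0 ≤ f x) :
    ∫ x in A, f x ∂μ ≤ (∫ x in s ∩ t, f x ∂μ) + ∫ x in A \ t, f x ∂μ := by
  rw [← integral_inter_add_sdiff ht (hf.mono_set hA)]
  gcongr ?_ + _
  refine setIntegral_mono_set (hf.mono_set Set.inter_subset_left) ?_
    (Set.inter_subset_inter_left t hA).eventuallyLE
  filter_upwards [ae_restrict_of_ae hf0, ae_restrict_mem (hs.inter ht)] with x hx hxst
  exact hx hxst.1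

theorem Annihilates.setIntegral_mul_mdot_add_le (hp : Annihilates Ω p) (hpL2 : L2MOn p Ω)
    (hΩ : MeasurableSet Ω) (hΩb : Bornology.IsBounded Ω) (hE : L2MOn E Ω) (hc : 0 ≤ c)
    (hnonneg : ∀ᵐ x, x ∈ Ω → 0 ≤ mdot (p x) (E x) + c) (hU : ContDiff ℝ (⊤ : ℕ∞) U)
    (hUc : HasCompactSupport U) (hφ : IsCutoff φ Ω) (hφD : ∀ x, ‖fderiv ℝ φ x‖ ≤ D) (hl : 0 < l)
    (hA : MeasurableSet A) (hAΩ : A ⊆ Ω) :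
    ∫ x in A, φ x * (mdot (p x) (E x) + c) ≤
      l2Norm p Ω * (n * (2 ^ (n + 1) + D) *
          √(∫ x in Ω ∩ maximalSuperlevel volume (jetNorm U) l, (l + ‖U x‖) ^ 2) +
        n * l * √(volume.real A) + 2 * l2Norm (fun x => symPart (fderiv ℝ U x) - E x) Ω) +
      c * (volume.real (maximalSuperlevel volume (jetNorm U) l) + volume.real A) := by
  set B := maximalSuperlevel volume (jetNorm U) l
  have hBmeas : MeasurableSet B :=
    (isOpen_maximalSuperlevel (jetNorm_nonneg U) (integrable_jetNorm hU hUc)).measurableSet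
  have hBfin : volume B ≠ ⊤ :=
    measure_maximalSuperlevel_ne_top (jetNorm_nonneg U) (integrable_jetNorm hU hUc) hl
  have hΩfin : volume Ω ≠ ⊤ := hΩb.measure_lt_top.ne
  have hAfin : volume A ≠ ⊤ := ne_top_of_le_ne_top hΩfin (measure_mono hAΩ)
  have hUL2 := l2MOn_symPart_fderiv_of_contDiff (S := Ω) hU hUc
  have hint := hpL2.integrableOn_mul_mdot_add (c := c) hE hφ.contDiff.continuous
    hφ.hasCompactSupport
  have hsplit := setIntegral_le_setIntegral_inter_add_setIntegral_sdiff hΩ hBmeas hAΩ hint <| by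
    filter_upwards [hnonneg] with x hx hxΩ
    exact mul_nonneg (hφ.mem_Icc x).1 (hx hxΩ)
  have hon := hp.abs_setIntegral_inter_maximalSuperlevel_le hpL2 hΩ hΩb hU hUc hφ hφD hl.le
  have hoff := hpL2.abs_setIntegral_mul_mdot_symPart_fderiv_le (hA.diff hBmeas)
    (Set.sdiff_subset.trans hAΩ) (measure_ne_top_of_subset Set.sdiff_subset hAfin) hU hUc hφ
    hl.le fun x hx => (norm_fderiv_le_jetNorm U x).trans
      (le_of_notMem_maximalSuperlevel (continuous_jetNorm hU) hx.2)
  have hmassB := hpL2.setIntegral_mul_mdot_add_le hE hUL2 Set.inter_subset_left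
    (measure_ne_top_of_subset Set.inter_subset_right hBfin) hφ hc
  have hmassA := hpL2.setIntegral_mul_mdot_add_le (S := A \ B) hE hUL2
    (Set.sdiff_subset.trans hAΩ) (measure_ne_top_of_subset Set.sdiff_subset hAfin) hφ hc
  have hB_le : c * volume.real (Ω ∩ B) ≤ c * volume.real B := by
    gcongr; exact Set.inter_subset_right
  have hA_le : c * volume.real (A \ B) ≤ c * volume.real A := by
    gcongr; exact Set.sdiff_subset
  have hsqrt_le : l2Norm p Ω * (n * l * √(volume.real (A \ B))) ≤
      l2Norm p Ω * (n * l * √(volume.real A)) := by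
    gcongr
    exacts [l2Norm_nonneg, Set.sdiff_subset]
  linarith

end LevelSetTesting

section UniformIntegrability

variable {α ι : Type*} [MeasurableSpace α] {μ : Measure α} {l : Filter ι} {h : ι → α → ℝ}
  {f g ψ : α → ℝ} {M : ℝ}

/-- Uniform integrability of a family along a filter: the measure below which all sets carry little
mass may be attained only eventually. -/
def EventuallyUnifIntegrable (h : ι → α → ℝ) (l : Filter ι) (μ : Measure α) : Prop :=
  ∀ ε : ℝ, 0 < ε → ∃ η : ℝ, 0 < η ∧ ∀ᶠ k in l, ∀ A, MeasurableSet A → μ A < ENNReal.ofReal η →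
    ∫ x in A, |h k x| ∂μ ≤ ε

theorem exists_pos_forall_setIntegral_lt (hf : Integrable f μ) {ε : ℝ} (hε : 0 < ε) :
    ∃ η : ℝ, 0 < η ∧ ∀ A, μ A < ENNReal.ofReal η → ∫ x in A, f x ∂μ < ε := by
  have hlim := hf.tendsto_setIntegral_nhds_zero (l := comap μ (𝓝 0)) (s := id) tendsto_comap
  obtain ⟨t, ht, hsub⟩ := mem_comap.1 (hlim.eventually (gt_mem_nhds hε))
  obtain ⟨η, hη, hηt⟩ := ENNReal.nhds_zero_basis.mem_iff.1 ht
  obtain ⟨r, -, hr0, hrη⟩ := ENNReal.lt_iff_exists_real_btwn.1 hη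
  rw [ENNReal.ofReal_pos] at hr0
  exact ⟨r, hr0, fun A hA => hsub (hηt (hA.trans hrη))⟩

theorem eventuallyUnifIntegrable_of_cutoffs (hint : ∀ k, Integrable (h k) μ)
    (hnonneg : ∀ k, 0 ≤ᵐ[μ] h k) (hlim : Tendsto (fun k => ∫ x, h k x ∂μ) l (𝓝 (∫ x, f x ∂μ)))
    (hcut : ∀ ε : ℝ, 0 < ε → ∃ φ : α → ℝ, AEStronglyMeasurable φ μ ∧
      (∀ x, φ x ∈ Set.Icc (0 : ℝ) 1) ∧ (∫ x, f x ∂μ) - ∫ x, φ x * f x ∂μ < ε ∧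
      Tendsto (fun k => ∫ x, φ x * h k x ∂μ) l (𝓝 (∫ x, φ x * f x ∂μ)) ∧
      EventuallyUnifIntegrable (fun k x => φ x * h k x) l μ) :
    EventuallyUnifIntegrable h l μ := by
  intro ε hε
  obtain ⟨φ, hφ, hφ01, hφf, hφlim, hφh⟩ := hcut (ε / 2) (half_pos hε)
  obtain ⟨η, hη, hsmall⟩ := hφh (ε / 2) (half_pos hε)
  refine ⟨η, hη, ?_⟩
  filter_upwards [hsmall, (hlim.sub hφlim).eventually (gt_mem_nhds hφf)] with k hk hrest A hA hAη
  have hφint : Integrable (fun x => φ x * h k x) μ :=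
    (hint k).bdd_mul (c := 1) hφ (ae_of_all _ fun x => by
      rw [Real.norm_of_nonneg (hφ01 x).1]; exact (hφ01 x).2)
  have hrest_int : Integrable (fun x => h k x - φ x * h k x) μ := (hint k).sub hφint
  rw [← integral_sub (hint k) hφint] at hrest
  have hrest_nonneg : 0 ≤ᵐ[μ] fun x => h k x - φ x * h k x := by
    filter_upwards [hnonneg k] with x hx
    simpa using mul_le_of_le_one_left hx (hφ01 x).2
  calc ∫ x in A, |h k x| ∂μ
      = ∫ x in A, (|φ x * h k x| + (h k x - φ x * h k x)) ∂μ := by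
        refine integral_congr_ae (ae_restrict_of_ae ?_)
        filter_upwards [hnonneg k] with x hx
        rw [abs_of_nonneg hx, abs_of_nonneg (mul_nonneg (hφ01 x).1 hx)]
        ring
    _ = (∫ x in A, |φ x * h k x| ∂μ) + ∫ x in A, (h k x - φ x * h k x) ∂μ :=
        integral_add hφint.abs.integrableOn hrest_int.integrableOn
    _ ≤ ε / 2 + ε / 2 :=
        add_le_add (hk A hA hAη) ((setIntegral_le_integral hrest_int hrest_nonneg).trans hrest.le)
    _ = ε := add_halves ε

theorem abs_integral_mul_sub_integral_mul_le (hf : Integrable f μ) (hg : AEStronglyMeasurable g μ)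
    (hgM : ∀ᵐ x ∂μ, |g x| ≤ M) (hψ : AEStronglyMeasurable ψ μ) (hψM : ∀ᵐ x ∂μ, |ψ x| ≤ M) {δ : ℝ}
    (hδ : 0 ≤ δ) {A : Set α} (hA : MeasurableSet A) (hgψ : ∀ᵐ x ∂μ, x ∉ A → |g x - ψ x| ≤ δ) :
    |(∫ x, f x * g x ∂μ) - ∫ x, f x * ψ x ∂μ| ≤
      δ * (∫ x, |f x| ∂μ) + 2 * M * ∫ x in A, |f x| ∂μ := by
  have hbound : ∀ᵐ x ∂μ,
      ‖f x * g x - f x * ψ x‖ ≤ δ * |f x| + 2 * M * A.indicator (fun x => |f x|) x := by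
    filter_upwards [hgM, hψM, hgψ] with x hgx hψx hx
    rw [← mul_sub, norm_mul, Real.norm_eq_abs, Real.norm_eq_abs, mul_comm]
    by_cases hxA : x ∈ A
    · rw [Set.indicator_of_mem hxA]
      have : |g x - ψ x| ≤ 2 * M := (abs_sub _ _).trans (by linarith)
      nlinarith [abs_nonneg (f x), mul_nonneg hδ (abs_nonneg (f x))]
    · rw [Set.indicator_of_notMem hxA, mul_zero, add_zero]
      exact mul_le_mul_of_nonneg_right (hx hxA) (abs_nonneg _)
  rw [← integral_sub (hf.mul_bdd hg hgM) (hf.mul_bdd hψ hψM), ← integral_indicator hA,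
    ← integral_const_mul, ← integral_const_mul, ← integral_add (hf.abs.const_mul _)
      ((hf.abs.indicator hA).const_mul _)]
  exact norm_integral_le_of_norm_le ((hf.abs.const_mul _).add
    ((hf.abs.indicator hA).const_mul _)) hbound

theorem tendsto_integral_mul_of_eventuallyUnifIntegrable (hh : EventuallyUnifIntegrable h l μ)
    (hint : ∀ k, Integrable (h k) μ) {R : ℝ} (hR : ∀ k, ∫ x, |h k x| ∂μ ≤ R)
    (hf : Integrable f μ) (hg : AEStronglyMeasurable g μ) (hM : 0 ≤ M) (hgM : ∀ᵐ x ∂μ, |g x| ≤ M)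
    (happrox : ∀ ε : ℝ, 0 < ε → ∃ ψ : α → ℝ, AEStronglyMeasurable ψ μ ∧ (∀ᵐ x ∂μ, |ψ x| ≤ M) ∧
      μ {x | ε ≤ |g x - ψ x|} < ENNReal.ofReal ε ∧
      Tendsto (fun k => ∫ x, h k x * ψ x ∂μ) l (𝓝 (∫ x, f x * ψ x ∂μ))) :
    Tendsto (fun k => ∫ x, h k x * g x ∂μ) l (𝓝 (∫ x, f x * g x ∂μ)) := by
  refine Metric.tendsto_nhds.2 fun τ hτ => ?_
  obtain ⟨κ, hκ, hκτ⟩ :=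
    exists_pos_mul_lt (half_pos hτ) (|R| + (∫ x, |f x| ∂μ) + 2 * M + 2 * M)
  obtain ⟨η₁, hη₁, hsmall₁⟩ := hh κ hκ
  obtain ⟨η₂, hη₂, hsmall₂⟩ := exists_pos_forall_setIntegral_lt hf.abs hκ
  obtain ⟨ψ, hψ, hψM, hA, hlim⟩ := happrox (min κ (min η₁ η₂)) (by positivity)
  set A := toMeasurable μ {x | min κ (min η₁ η₂) ≤ |g x - ψ x|} with hAdef
  have hAm : MeasurableSet A := measurableSet_toMeasurable _ _
  have hgψ : ∀ᵐ x ∂μ, x ∉ A → |g x - ψ x| ≤ κ := ae_of_all _ fun x hx =>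
    (not_le.1 fun hle => hx (subset_toMeasurable _ _ hle)).le.trans (min_le_left _ _)
  have hAη : ∀ η, min κ (min η₁ η₂) ≤ η → μ A < ENNReal.ofReal η := fun η hη => by
    rw [hAdef, measure_toMeasurable]
    exact hA.trans_le (ENNReal.ofReal_le_ofReal hη)
  have hAη₁ := hAη η₁ ((min_le_right _ _).trans (min_le_left _ _))
  have hfA := hsmall₂ A (hAη η₂ ((min_le_right _ _).trans (min_le_right _ _)))
  have hfψ := abs_integral_mul_sub_integral_mul_le hf hg hgM hψ hψM hκ.le hAm hgψ
  filter_upwards [hsmall₁, Metric.tendsto_nhds.1 hlim (τ / 2) (by positivity)] with k hk hmid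
  have hkψ := abs_integral_mul_sub_integral_mul_le (hint k) hg hgM hψ hψM hκ.le hAm hgψ
  have hkA := mul_le_mul_of_nonneg_left (hk A hAm hAη₁) (mul_nonneg zero_le_two hM)
  have hkR := mul_le_mul_of_nonneg_left ((hR k).trans (le_abs_self R)) hκ.le
  have hfA' := mul_le_mul_of_nonneg_left hfA.le (mul_nonneg zero_le_two hM)
  rw [Real.dist_eq] at hmid ⊢
  calc |(∫ x, h k x * g x ∂μ) - ∫ x, f x * g x ∂μ|
      ≤ |(∫ x, h k x * g x ∂μ) - ∫ x, h k x * ψ x ∂μ| +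
          |(∫ x, h k x * ψ x ∂μ) - ∫ x, f x * ψ x ∂μ| +
          |(∫ x, f x * g x ∂μ) - ∫ x, f x * ψ x ∂μ| := by
        rw [abs_sub_comm (∫ x, f x * g x ∂μ)]
        exact (abs_sub_le _ _ _).trans (add_le_add_left (abs_sub_le _ _ _) _)
    _ < (|R| + (∫ x, |f x| ∂μ) + 2 * M + 2 * M) * κ + τ / 2 := by linarith
    _ < τ := by linarith

end UniformIntegrability

section Cutoffs

variable {G : Type*} [NormedAddCommGroup G] [NormedSpace ℝ G] [FiniteDimensional ℝ G]
  {K Ω : Set G}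

theorem exists_isCutoff_eqOn_one (hK : IsCompact K) (hΩ : IsOpen Ω) (hKΩ : K ⊆ Ω) :
    ∃ φ, IsCutoff φ Ω ∧ Set.EqOn φ 1 K := by
  obtain ⟨L, hL, hKL, hLΩ⟩ := exists_compact_between hK hΩ hKΩ
  obtain ⟨φ, hφ1, hφ0, hφ01⟩ := exists_contMDiffMap_one_nhds_of_subset_interior
    (modelWithCornersSelf ℝ G) (n := (⊤ : ℕ∞)) hK.isClosed hKL
  have hφL : tsupport φ ⊆ L :=
    closure_minimal (Function.support_subset_iff'.2 hφ0) hL.isClosed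
  exact ⟨φ, ⟨φ.contMDiff.contDiff, hL.of_isClosed_subset (isClosed_tsupport _) hφL,
    hφL.trans hLΩ, hφ01⟩, hφ1.self_of_nhdsSet⟩

variable [MeasurableSpace G] [BorelSpace G] {μ : Measure G} {f g : G → ℝ} {ε M : ℝ}

theorem exists_isCutoff_setIntegral_sub_lt [IsFiniteMeasureOnCompacts μ] (hΩ : IsOpen Ω)
    (hΩfin : μ Ω ≠ ⊤) (hf : IntegrableOn f Ω μ) (hε : 0 < ε) :
    ∃ φ, IsCutoff φ Ω ∧ (∫ x in Ω, f x ∂μ) - ∫ x in Ω, φ x * f x ∂μ < ε := by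
  obtain ⟨η, hη, hsmall⟩ := exists_pos_forall_setIntegral_lt hf.abs hε
  obtain ⟨K, hKΩ, hK, hμK⟩ := hΩ.measurableSet.exists_isCompact_sdiff_lt hΩfin
    (ENNReal.ofReal_pos.2 hη).ne'
  obtain ⟨φ, hφ, hφK⟩ := exists_isCutoff_eqOn_one hK hΩ hKΩ
  have hKc : MeasurableSet Kᶜ := hK.measurableSet.compl
  have hφf : IntegrableOn (fun x => φ x * f x) Ω μ :=
    Integrable.bdd_mul hf hφ.contDiff.continuous.aestronglyMeasurable
      (ae_of_all _ hφ.abs_le_one)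
  refine ⟨φ, hφ, ?_⟩
  calc (∫ x in Ω, f x ∂μ) - ∫ x in Ω, φ x * f x ∂μ
      = ∫ x in Ω, (f x - φ x * f x) ∂μ := (integral_sub hf hφf).symm
    _ ≤ ∫ x in Ω, Kᶜ.indicator (fun x => |f x|) x ∂μ := by
        refine integral_mono (hf.sub hφf) (hf.abs.indicator hKc) fun x => ?_
        by_cases hx : x ∈ K
        · simp [hx, hφK hx]
        · rw [Set.indicator_of_mem (Set.mem_compl hx), ← one_sub_mul]
          refine (le_abs_self _).trans ?_
          rw [abs_mul, abs_of_nonneg (sub_nonneg.2 (hφ.mem_Icc x).2)]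
          exact mul_le_of_le_one_left (abs_nonneg _) (by linarith [(hφ.mem_Icc x).1])
    _ = ∫ x in Kᶜ, |f x| ∂μ.restrict Ω := integral_indicator hKc
    _ < ε := hsmall _ (by rwa [Measure.restrict_apply hKc, Set.inter_comm])

theorem abs_mollify_le [μ.IsAddHaarMeasure] {b : ContDiffBump (0 : G)} (hf : ∀ᵐ x ∂μ, |f x| ≤ M)
    (x : G) : |mollify b μ f x| ≤ M := by
  have hint : Integrable (fun t => M * b.normed μ (x - t)) μ :=
    (b.integrable_normed.comp_sub_left x).const_mul M
  calc |mollify b μ f x| ≤ ∫ t, M * b.normed μ (x - t) ∂μ := by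
        refine norm_integral_le_of_norm_le (f := fun t => f t * b.normed μ (x - t)) hint
          (hf.mono fun t ht => ?_)
        rw [norm_mul, Real.norm_of_nonneg (b.nonneg_normed _)]
        exact mul_le_mul_of_nonneg_right ht (b.nonneg_normed _)
    _ = M := by
        rw [integral_const_mul, integral_sub_left_eq_self (b.normed μ) μ x, b.integral_normed,
          mul_one]

theorem exists_measure_mollify_sub_lt [μ.IsAddHaarMeasure] (hf : MemLp f 2 μ) {η : ℝ}
    (hε : 0 < ε) (hη : 0 < η) :
    ∃ b : ContDiffBump (0 : G), μ {x | ε ≤ |mollify b μ f x - f x|} < ENNReal.ofReal η := by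
  obtain ⟨b, hb⟩ := exists_contDiffBump_tendsto_rOut_zero (G := G)
  obtain ⟨i, hi⟩ := ((tendsto_integral_sq_mollify_sub hb hf).eventually_lt_const
    (show 0 < ε ^ 2 * η by positivity)).exists
  have hint : Integrable (fun x => (mollify (b i) μ f x - f x) ^ 2) μ :=
    ((memLp_mollify hf).sub hf).integrable_sq
  refine ⟨b i, ?_⟩
  have hiff : ∀ x, ε ≤ |mollify (b i) μ f x - f x| ↔ ε ^ 2 ≤ (mollify (b i) μ f x - f x) ^ 2 :=
    fun x => by rw [← sq_abs (_ - _), pow_le_pow_iff_left₀ hε.le (abs_nonneg _) two_ne_zero]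
  simp only [hiff]
  rw [ENNReal.lt_ofReal_iff_toReal_lt (hint.measure_ge_lt_top (by positivity)).ne]
  exact lt_of_mul_lt_mul_left ((mul_meas_ge_le_integral_of_nonneg
    (ae_of_all _ fun x => sq_nonneg _) hint _).trans_lt hi) (sq_nonneg ε)

theorem exists_contDiff_approx_of_bounded [μ.IsAddHaarMeasure] (hΩ : IsOpen Ω) (hΩfin : μ Ω ≠ ⊤)
    (hg : Measurable g) (hM : 0 ≤ M) (hgM : ∀ᵐ x ∂μ, x ∈ Ω → |g x| ≤ M) (hε : 0 < ε) :
    ∃ ψ : G → ℝ, ContDiff ℝ (⊤ : ℕ∞) ψ ∧ HasCompactSupport ψ ∧ tsupport ψ ⊆ Ω ∧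
      (∀ x, |ψ x| ≤ M) ∧ μ.restrict Ω {x | ε ≤ |g x - ψ x|} < ENNReal.ofReal ε := by
  have hfM : ∀ᵐ x ∂μ, |Ω.indicator g x| ≤ M := hgM.mono fun x hx => by
    by_cases hxΩ : x ∈ Ω <;> simp [hxΩ, hx, hM]
  have hf : MemLp (Ω.indicator g) 2 μ := by
    rw [memLp_indicator_iff_restrict hΩ.measurableSet]
    have : IsFiniteMeasure (μ.restrict Ω) := isFiniteMeasure_restrict.2 hΩfin
    exact MemLp.of_bound hg.aestronglyMeasurable M ((ae_restrict_iff' hΩ.measurableSet).2 hgM)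
  obtain ⟨b, hb⟩ := exists_measure_mollify_sub_lt hf hε (half_pos hε)
  obtain ⟨K, hKΩ, hK, hμK⟩ := hΩ.measurableSet.exists_isCompact_sdiff_lt hΩfin
    (ENNReal.ofReal_pos.2 (half_pos hε)).ne'
  obtain ⟨χ, hχ, hχK⟩ := exists_isCutoff_eqOn_one hK hΩ hKΩ
  have hmoll := contDiff_mollify (b := b) (hf.locallyIntegrable (by norm_num))
  refine ⟨fun x => χ x * mollify b μ (Ω.indicator g) x, hχ.contDiff.mul hmoll,
    hχ.hasCompactSupport.mul_right, (tsupport_mul_subset_left).trans hχ.tsupport_subset,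
    fun x => ?_, ?_⟩
  · rw [abs_mul]
    exact (mul_le_of_le_one_left (abs_nonneg _) (hχ.abs_le_one x)).trans (abs_mollify_le hfM x)
  have hcover : {x | ε ≤ |g x - χ x * mollify b μ (Ω.indicator g) x|} ∩ Ω ⊆
      (Ω \ K) ∪ {x | ε ≤ |mollify b μ (Ω.indicator g) x - Ω.indicator g x|} := by
    rintro x ⟨hx, hxΩ⟩
    by_cases hxK : x ∈ K
    · right
      simpa [hχK hxK, hxΩ, abs_sub_comm] using hx
    · exact Or.inl ⟨hxΩ, hxK⟩
  calc μ.restrict Ω {x | ε ≤ |g x - χ x * mollify b μ (Ω.indicator g) x|}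
      ≤ μ (Ω \ K) + μ {x | ε ≤ |mollify b μ (Ω.indicator g) x - Ω.indicator g x|} := by
        rw [Measure.restrict_apply' hΩ.measurableSet]
        exact (measure_mono hcover).trans (measure_union_le _ _)
    _ < ENNReal.ofReal (ε / 2) + ENNReal.ofReal (ε / 2) := ENNReal.add_lt_add hμK hb
    _ = ENNReal.ofReal ε := by
        rw [← ENNReal.ofReal_add (half_pos hε).le (half_pos hε).le, add_halves]

end Cutoffs

section LevelSelection

theorem exists_pos_mul_sqrt_add_mul_lt {ε : ℝ} (hε : 0 < ε) (a b : ℝ) :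
    ∃ δ : ℝ, 0 < δ ∧ a * √δ + b * δ < ε := by
  have hcont : ContinuousAt (fun δ : ℝ => a * √δ + b * δ) 0 := by fun_prop
  have hlt := hcont.eventually (gt_mem_nhds (show a * √0 + b * 0 < ε by simpa using hε))
  exact ((eventually_mem_nhdsWithin (s := Set.Ioi 0)).and
    (hlt.filter_mono nhdsWithin_le_nhds)).exists

theorem setIntegral_sq_add_norm_le {α F : Type*} [MeasurableSpace α] {μ : Measure α}
    [NormedAddCommGroup F] {U u : α → F} {S : Set α} (hS : μ S ≠ ⊤) (hU : MemLp U 2 μ)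
    (hu : MemLp u 2 μ) (l : ℝ) :
    ∫ x in S, (l + ‖U x‖) ^ 2 ∂μ ≤
      2 * (l ^ 2 * μ.real S) + 4 * (∫ x, ‖U x - u x‖ ^ 2 ∂μ) + 4 * ∫ x in S, ‖u x‖ ^ 2 ∂μ := by
  have hUu : Integrable (fun x => ‖U x - u x‖ ^ 2) μ := (hU.sub hu).integrable_norm_pow two_ne_zero
  have hu2 : Integrable (fun x => ‖u x‖ ^ 2) μ := hu.integrable_norm_pow two_ne_zero
  have hconst : IntegrableOn (fun _ => 2 * l ^ 2) S μ := integrableOn_const hS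
  have hsum : IntegrableOn (fun x => 2 * l ^ 2 + 4 * ‖U x - u x‖ ^ 2) S μ :=
    hconst.add (hUu.integrableOn.const_mul 4)
  have hsum' : IntegrableOn (fun x => 2 * l ^ 2 + 4 * ‖U x - u x‖ ^ 2 + 4 * ‖u x‖ ^ 2) S μ :=
    hsum.add (hu2.integrableOn.const_mul 4)
  have hle : ∀ x, (l + ‖U x‖) ^ 2 ≤ 2 * l ^ 2 + 4 * ‖U x - u x‖ ^ 2 + 4 * ‖u x‖ ^ 2 := fun x => by
    have htri : ‖U x‖ ≤ ‖U x - u x‖ + ‖u x‖ := by simpa using norm_add_le (U x - u x) (u x)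
    nlinarith [sq_nonneg (l - ‖U x‖), sq_nonneg (‖U x - u x‖ - ‖u x‖), norm_nonneg (U x)]
  calc ∫ x in S, (l + ‖U x‖) ^ 2 ∂μ
      ≤ ∫ x in S, (2 * l ^ 2 + 4 * ‖U x - u x‖ ^ 2 + 4 * ‖u x‖ ^ 2) ∂μ :=
        integral_mono_of_nonneg (ae_of_all _ fun x => sq_nonneg _) hsum' (ae_of_all _ hle)
    _ = 2 * (l ^ 2 * μ.real S) + 4 * (∫ x in S, ‖U x - u x‖ ^ 2 ∂μ) +
          4 * ∫ x in S, ‖u x‖ ^ 2 ∂μ := by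
        rw [integral_add hsum (hu2.integrableOn.const_mul 4),
          integral_add hconst (hUu.integrableOn.const_mul 4), setIntegral_const,
          integral_const_mul, integral_const_mul, smul_eq_mul]
        ring
    _ ≤ _ := by
        have := setIntegral_le_integral (s := S) hUu (ae_of_all _ fun x => sq_nonneg _)
        linarith

variable {n : ℕ} {Ω : Set (RV n)} {Uk : ℕ → VField n} {u : VField n} {Ek pk : ℕ → MField n}
  {φ : RV n → ℝ} {R M c ε : ℝ}

/-- Smooth fields `Uk` with first-order jets bounded by `√R` in `L²` that converge to `u` in `L²`
and whose symmetrized gradients are asymptotically equal to `Ek` in `L²(Ω)`. -/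
structure IsSmoothApprox (Uk : ℕ → VField n) (u : VField n) (Ek : ℕ → MField n) (Ω : Set (RV n))
    (R : ℝ) : Prop where
  contDiff : ∀ k, ContDiff ℝ (⊤ : ℕ∞) (Uk k)
  hasCompactSupport : ∀ k, HasCompactSupport (Uk k)
  integral_sq_jetNorm_le : ∀ k, ∫ x, jetNorm (Uk k) x ^ 2 ≤ R
  memLp : MemLp u 2
  tendsto_integral_sq_norm_sub : Tendsto (fun k => ∫ x, ‖Uk k x - u x‖ ^ 2) atTop (𝓝 0)
  tendsto_l2Norm_sub :
    Tendsto (fun k => l2Norm (fun x => symPart (fderiv ℝ (Uk k) x) - Ek k x) Ω) atTop (𝓝 0)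

theorem exists_level_sq_mul_measureReal_lt (hR : 0 ≤ R) {η : ℝ} (hε : 0 < ε) (hη : 0 < η) :
    ∃ Λ : ℝ, ∀ U : VField n, ContDiff ℝ (⊤ : ℕ∞) U → HasCompactSupport U →
      ∫ x, jetNorm U x ^ 2 ≤ R → ∃ l : ℝ, 0 < l ∧ l ≤ Λ ∧
        l ^ 2 * volume.real (maximalSuperlevel volume (jetNorm U) l) < ε ∧
        volume.real (maximalSuperlevel volume (jetNorm U) l) < η := by
  obtain ⟨J, hJ⟩ := exists_nat_gt (8 * 5 ^ n * R / ε)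
  have hJ0 : (0 : ℝ) < J := hJ.trans_le' (by positivity)
  obtain ⟨s, hs⟩ := pow_unbounded_of_one_lt (ε / η) one_lt_two
  refine ⟨2 ^ (s + J), fun U hU hUc hUR => ?_⟩
  obtain ⟨l, hsl, hlJ, hl⟩ := exists_level_sq_mul_measureReal_maximalSuperlevel_le
    (jetNorm_nonneg U) (integrable_jetNorm hU hUc) (integrable_sq_jetNorm hU hUc) s
    (by exact_mod_cast hJ0)
  set m := volume.real (maximalSuperlevel volume (jetNorm U) l)
  have hl1 : 1 ≤ l := (one_le_pow₀ one_le_two).trans hsl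
  have hlm : l ^ 2 * m < ε := by
    refine hl.trans_lt ((div_lt_iff₀ hJ0).2 ?_)
    rw [Module.finrank_fin_fun]
    rw [div_lt_iff₀ hε] at hJ
    calc 8 * 5 ^ n * ∫ x, jetNorm U x ^ 2 ≤ 8 * 5 ^ n * R := by gcongr
      _ < ε * J := by linarith
  refine ⟨l, by linarith, hlJ, hlm, lt_of_mul_lt_mul_left ?_ (sq_nonneg l)⟩
  calc l ^ 2 * m < ε := hlm
    _ < 2 ^ s * η := (div_lt_iff₀ hη).1 hs
    _ ≤ l ^ 2 * η := by gcongr; nlinarith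

theorem IsSmoothApprox.exists_levels (h : IsSmoothApprox Uk u Ek Ω R) (hε : 0 < ε) :
    ∃ Λ : ℝ, ∀ᶠ k in atTop, ∃ l : ℝ, 0 < l ∧ l ≤ Λ ∧
      volume.real (maximalSuperlevel volume (jetNorm (Uk k)) l) ≤ ε ∧
      ∫ x in Ω ∩ maximalSuperlevel volume (jetNorm (Uk k)) l, (l + ‖Uk k x‖) ^ 2 ≤ ε := by
  have hR : 0 ≤ R := (integral_nonneg fun x => sq_nonneg _).trans (h.integral_sq_jetNorm_le 0)
  obtain ⟨η, hη, hsmall⟩ := exists_pos_forall_setIntegral_lt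
    (h.memLp.integrable_norm_pow two_ne_zero) (show 0 < ε / 16 by positivity)
  obtain ⟨Λ, hΛ⟩ := exists_level_sq_mul_measureReal_lt (n := n) hR
    (show 0 < ε / 8 by positivity) (lt_min hε hη)
  refine ⟨Λ, ?_⟩
  filter_upwards [h.tendsto_integral_sq_norm_sub.eventually_lt_const
    (show 0 < ε / 16 by positivity)] with k hk
  have hU := h.contDiff k
  have hUc := h.hasCompactSupport k
  obtain ⟨l, hl, hlΛ, hlB, hB⟩ := hΛ (Uk k) hU hUc (h.integral_sq_jetNorm_le k)
  have hBfin := measure_maximalSuperlevel_ne_top (jetNorm_nonneg (Uk k))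
    (integrable_jetNorm hU hUc) hl
  refine ⟨l, hl, hlΛ, hB.le.trans (min_le_left _ _), ?_⟩
  set B := maximalSuperlevel volume (jetNorm (Uk k)) l
  have hSB : volume (Ω ∩ B) ≤ volume B := measure_mono Set.inter_subset_right
  have hSfin : volume (Ω ∩ B) ≠ ⊤ := ne_top_of_le_ne_top hBfin hSB
  have hlS : l ^ 2 * volume.real (Ω ∩ B) ≤ l ^ 2 * volume.real B := by
    gcongr
    exact Set.inter_subset_right
  have huS := hsmall (Ω ∩ B) (hSB.trans_lt ((ENNReal.lt_ofReal_iff_toReal_lt hBfin).2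
    (hB.trans_le (min_le_right _ _))))
  have := setIntegral_sq_add_norm_le hSfin (hU.continuous.memLp_of_hasCompactSupport hUc)
    h.memLp l
  linarith

theorem IsSmoothApprox.eventuallyUnifIntegrable (h : IsSmoothApprox Uk u Ek Ω R)
    (hΩ : MeasurableSet Ω) (hΩb : Bornology.IsBounded Ω) (hp : ∀ k, Annihilates Ω (pk k))
    (hpL2 : ∀ k, L2MOn (pk k) Ω) (hpM : ∀ k, l2Norm (pk k) Ω ≤ M) (hE : ∀ k, L2MOn (Ek k) Ω)
    (hc : 0 ≤ c) (hnonneg : ∀ k, ∀ᵐ x, x ∈ Ω → 0 ≤ mdot (pk k x) (Ek k x) + c)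
    (hφ : IsCutoff φ Ω) :
    EventuallyUnifIntegrable (fun k x => φ x * (mdot (pk k x) (Ek k x) + c)) atTop
      (volume.restrict Ω) := by
  intro ε hε
  obtain ⟨D, hφD⟩ := (hφ.hasCompactSupport.fderiv ℝ).exists_bound_of_continuous
    (hφ.contDiff.continuous_fderiv (by simp))
  have hM : 0 ≤ M := l2Norm_nonneg.trans (hpM 0)
  have hD : 0 ≤ D := (norm_nonneg _).trans (hφD 0)
  obtain ⟨δ, hδ, hδε⟩ :=
    exists_pos_mul_sqrt_add_mul_lt (show 0 < ε / 3 by positivity) (M * (n * (2 ^ (n + 1) + D))) c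
  obtain ⟨Λ, hΛ⟩ := h.exists_levels hδ
  obtain ⟨η, hη, hηε⟩ :=
    exists_pos_mul_sqrt_add_mul_lt (show 0 < ε / 3 by positivity) (M * (n * Λ)) c
  have hEU := (h.tendsto_l2Norm_sub.const_mul (M * 2)).eventually_lt_const
    (show M * 2 * 0 < ε / 3 by simpa using hε)
  refine ⟨η, hη, ?_⟩
  filter_upwards [hΛ, hEU] with k ⟨l, hl, hlΛ, hB, hBint⟩ hk A hA hAη
  rw [Measure.restrict_apply hA] at hAη
  have hAη : volume.real (A ∩ Ω) ≤ η := ENNReal.toReal_le_of_le_ofReal hη.le hAη.le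
  calc ∫ x in A, |φ x * (mdot (pk k x) (Ek k x) + c)| ∂volume.restrict Ω
      = ∫ x in A ∩ Ω, φ x * (mdot (pk k x) (Ek k x) + c) := by
        rw [Measure.restrict_restrict hA]
        refine setIntegral_congr_ae (hA.inter hΩ) ((hnonneg k).mono fun x hx hxA => ?_)
        exact abs_of_nonneg (mul_nonneg (hφ.mem_Icc x).1 (hx hxA.2))
    _ ≤ _ := (hp k).setIntegral_mul_mdot_add_le (hpL2 k) hΩ hΩb (hE k) hc (hnonneg k)
        (h.contDiff k) (h.hasCompactSupport k) hφ hφD hl (hA.inter hΩ) Set.inter_subset_right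
    _ ≤ M * (n * (2 ^ (n + 1) + D) * √δ + n * Λ * √η +
          2 * l2Norm (fun x => symPart (fderiv ℝ (Uk k) x) - Ek k x) Ω) + c * (δ + η) := by
        have hΛ0 : 0 ≤ Λ := hl.le.trans hlΛ
        have := l2Norm_nonneg (E := fun x => symPart (fderiv ℝ (Uk k) x) - Ek k x) (s := Ω)
        gcongr
        exact hpM k
    _ ≤ ε := by linarith

end LevelSelection

section AdmissiblePairs

variable {n : ℕ} {Ω S : Set (RV n)} {u v : VField n} {p : MField n} {pk : ℕ → MField n}
  {φ : RV n → ℝ} {D : ℝ}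

theorem sq_norm_le_sum_sq (v : RV n) : ‖v‖ ^ 2 ≤ ∑ i, v i ^ 2 := by
  have hnonneg : 0 ≤ ∑ i, v i ^ 2 := Finset.sum_nonneg fun i _ => sq_nonneg _
  refine (Real.le_sqrt (norm_nonneg _) hnonneg).1 ((pi_norm_le_iff_of_nonneg (by positivity)).2
    fun i => Real.abs_le_sqrt ?_)
  exact Finset.single_le_sum (f := fun i => v i ^ 2) (fun i _ => sq_nonneg _) (Finset.mem_univ i)

theorem integral_sq_norm_le_integral_sum_sq {μ : Measure (RV n)} (hv : MemLp v 2 μ) :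
    ∫ x, ‖v x‖ ^ 2 ∂μ ≤ ∫ x, ∑ i, v x i ^ 2 ∂μ :=
  integral_mono_of_nonneg (ae_of_all _ fun _ => sq_nonneg _)
    (integrable_finsetSum _ fun i _ => (memLp_pi_iff.1 hv i).integrable_sq)
    (ae_of_all _ fun x => sq_norm_le_sum_sq (v x))

theorem AdmPair.memLp_u (W : AdmPair n Ω) : MemLp W.u 2 := by
  simpa using (l2VOn_iff_memLp.1 W.hu).2

theorem AdmPair.l2Norm_E_univ (W : AdmPair n Ω) : l2Norm W.E Set.univ = l2Norm W.E Ω := by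
  rw [l2Norm, l2Norm, setIntegral_univ, setIntegral_eq_integral_of_ae_compl_eq_zero]
  exact W.hEz.mono fun x hx hxΩ => by simp [hx hxΩ, mdot]

theorem WeakL2M.annihilates (hw : WeakL2M pk p Ω) (hp : ∀ k, Annihilates Ω (pk k)) :
    Annihilates Ω p := fun W =>
  tendsto_nhds_unique (hw W.E (W.hE.mono (Set.subset_univ Ω)))
    (tendsto_const_nhds.congr fun k => (hp k W).symm)

theorem l2Norm_symPart_smulRight_sub_le (hS : MeasurableSet S)
    (huv : MemLp (fun x => u x - v x) 2) (hφD : ∀ x, ‖fderiv ℝ φ x‖ ≤ D) :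
    l2Norm (fun x => symPart ((fderiv ℝ φ x).smulRight (u x)) -
      symPart ((fderiv ℝ φ x).smulRight (v x))) S ≤ n * D * √(∫ x, ‖u x - v x‖ ^ 2) := by
  have hD : 0 ≤ D := (norm_nonneg _).trans (hφD 0)
  have hint : Integrable fun x => ‖u x - v x‖ ^ 2 := huv.integrable_norm_pow two_ne_zero
  refine (l2Norm_le_mul_sqrt hS (by positivity) hint.integrableOn (K := n * D) <|
    ae_of_all _ fun x _ => ?_).trans ?_
  · rw [← symPart_sub, mul_assoc]
    refine (mdot_symPart_self_le _).trans ?_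
    have hsub : (fderiv ℝ φ x).smulRight (u x) - (fderiv ℝ φ x).smulRight (v x) =
        (fderiv ℝ φ x).smulRight (u x - v x) := by ext; simp [mul_sub]
    rw [hsub, ContinuousLinearMap.norm_smulRight_apply]
    gcongr
    exact hφD x
  · exact mul_le_mul_of_nonneg_left (Real.sqrt_le_sqrt
      (setIntegral_le_integral hint (ae_of_all _ fun _ => sq_nonneg _))) (by positivity)

variable {P : ℕ → AdmPair n Ω} {Q : AdmPair n Ω}

theorem WeakL2M.tendsto_setIntegral_mul_mdot (hw : WeakL2M pk p Ω) (hΩ : MeasurableSet Ω)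
    (hp : ∀ k, Annihilates Ω (pk k)) (hpkL2 : ∀ k, L2MOn (pk k) Ω) (hpL2 : L2MOn p Ω)
    (hu : Tendsto (fun k => ∫ x, ‖(P k).u x - Q.u x‖ ^ 2) atTop (𝓝 0))
    (hφ : ContDiff ℝ (⊤ : ℕ∞) φ) (hφc : HasCompactSupport φ) (hφΩ : tsupport φ ⊆ Ω) :
    Tendsto (fun k => ∫ x in Ω, φ x * mdot (pk k x) ((P k).E x)) atTop
      (𝓝 (∫ x in Ω, φ x * mdot (p x) (Q.E x))) := by
  obtain ⟨D, hφD⟩ := (hφc.fderiv ℝ).exists_bound_of_continuous (hφ.continuous_fderiv (by simp))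
  have hu_mono : ∀ W : AdmPair n Ω, L2VOn W.u Ω := fun W =>
    ⟨W.hu.1, W.hu.2.mono_set (Set.subset_univ Ω)⟩
  have hparts : ∀ q, Annihilates Ω q → L2MOn q Ω → ∀ W : AdmPair n Ω,
      ∫ x in Ω, φ x * mdot (q x) (W.E x) =
        -∫ x in Ω, mdot (q x) (symPart ((fderiv ℝ φ x).smulRight (W.u x))) := fun q hq hqL2 W =>
    hq.setIntegral_mul_mdot_eq_neg hqL2 W.hgrad (hu_mono W) (W.hE.mono (Set.subset_univ Ω)) W.hsym
      hφ hφc hφΩ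
  rw [hparts p (hw.annihilates hp) hpL2 Q]
  simp only [fun k => hparts (pk k) (hp k) (hpkL2 k) (P k)]
  refine (hw.tendsto_integral_mdot hpkL2 hpL2
    (fun k => (hu_mono (P k)).symPart_smulRight_fderiv hφ hφc)
    ((hu_mono Q).symPart_smulRight_fderiv hφ hφc) ?_).neg
  refine squeeze_zero (fun _ => l2Norm_nonneg) (fun k => l2Norm_symPart_smulRight_sub_le hΩ
    ((P k).memLp_u.sub Q.memLp_u) hφD) ?_
  simpa using (hu.sqrt).const_mul (n * D)

end AdmissiblePairs

section ApproximatingSequence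

variable {n : ℕ} {Ω S : Set (RV n)} {U u : VField n} {E F : MField n} {P : ℕ → AdmPair n Ω}
  {M : ℝ}

theorem integral_sq_norm_sub_le {α F : Type*} [MeasurableSpace α] {μ : Measure α}
    [NormedAddCommGroup F] {f g h : α → F} (hf : MemLp f 2 μ) (hg : MemLp g 2 μ)
    (hh : MemLp h 2 μ) :
    ∫ x, ‖f x - h x‖ ^ 2 ∂μ ≤ 2 * (∫ x, ‖f x - g x‖ ^ 2 ∂μ) + 2 * ∫ x, ‖g x - h x‖ ^ 2 ∂μ := by
  have hfg : Integrable (fun x => 2 * ‖f x - g x‖ ^ 2) μ :=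
    ((hf.sub hg).integrable_norm_pow two_ne_zero).const_mul 2
  have hgh : Integrable (fun x => 2 * ‖g x - h x‖ ^ 2) μ :=
    ((hg.sub hh).integrable_norm_pow two_ne_zero).const_mul 2
  rw [← integral_const_mul, ← integral_const_mul, ← integral_add hfg hgh]
  refine integral_mono_of_nonneg (ae_of_all _ fun _ => sq_nonneg _) (hfg.add hgh)
    (ae_of_all _ fun x => ?_)
  calc ‖f x - h x‖ ^ 2 ≤ (‖f x - g x‖ + ‖g x - h x‖) ^ 2 := by
        gcongr; exact norm_sub_le_norm_sub_add_norm_sub _ _ _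
    _ ≤ 2 * ‖f x - g x‖ ^ 2 + 2 * ‖g x - h x‖ ^ 2 := by
        linarith [add_sq_le (a := ‖f x - g x‖) (b := ‖g x - h x‖)]

theorem L2MOn.l2Norm_le_l2Norm_sub_add (hE : L2MOn E S) (hF : L2MOn F S) :
    l2Norm E S ≤ l2Norm (fun x => E x - F x) S + l2Norm F S := by
  rw [← hE.norm_toL2, ← hF.norm_toL2, ← (hE.sub hF).norm_toL2, hE.toL2_sub hF]
  exact norm_le_norm_sub_add _ _

theorem integral_sq_jetNorm_le (hU : ContDiff ℝ (⊤ : ℕ∞) U) (hUc : HasCompactSupport U) :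
    ∫ x, jetNorm U x ^ 2 ≤
      2 * (∫ x, ‖U x‖ ^ 2) + 4 * n * l2Norm (fun x => symPart (fderiv ℝ U x)) Set.univ ^ 2 := by
  have hU2 : Integrable fun x => 2 * ‖U x‖ ^ 2 :=
    ((hU.continuous.memLp_of_hasCompactSupport hUc).integrable_norm_pow two_ne_zero).const_mul 2
  have hDU2 : Integrable fun x => 2 * ‖fderiv ℝ U x‖ ^ 2 :=
    (((hU.continuous_fderiv (by simp)).memLp_of_hasCompactSupport
      (hUc.fderiv ℝ)).integrable_norm_pow two_ne_zero).const_mul 2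
  calc ∫ x, jetNorm U x ^ 2 ≤ ∫ x, (2 * ‖U x‖ ^ 2 + 2 * ‖fderiv ℝ U x‖ ^ 2) :=
        integral_mono_of_nonneg (ae_of_all _ fun _ => sq_nonneg _) (hU2.add hDU2)
          (ae_of_all _ fun x => add_sq_le.trans_eq (mul_add _ _ _))
    _ = 2 * (∫ x, ‖U x‖ ^ 2) + 2 * ∫ x, ‖fderiv ℝ U x‖ ^ 2 := by
        rw [integral_add hU2 hDU2, integral_const_mul, integral_const_mul]
    _ ≤ _ := by
        rw [sq_l2Norm, setIntegral_univ]
        linarith [integral_sq_norm_fderiv_le hU hUc]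

theorem AdmPair.exists_contDiff_approx_seq (hΩ : Bornology.IsBounded Ω) (P : ℕ → AdmPair n Ω) :
    ∃ U : ℕ → VField n, (∀ k, ContDiff ℝ (⊤ : ℕ∞) (U k)) ∧ (∀ k, HasCompactSupport (U k)) ∧
      (∀ k, ∫ x, ‖U k x - (P k).u x‖ ^ 2 ≤ 1 / ((k : ℝ) + 1)) ∧
      ∀ k, l2Norm (fun x => symPart (fderiv ℝ (U k) x) - (P k).E x) Set.univ ≤
        1 / ((k : ℝ) + 1) := by
  choose U hU hUc hUu hUE using fun k : ℕ =>
    (P k).exists_contDiff_approx hΩ (Nat.one_div_pos_of_nat (α := ℝ) (n := k))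
  refine ⟨U, hU, hUc, fun k => le_trans ?_ (hUu k).le, fun k => (hUE k).le⟩
  exact integral_sq_norm_le_integral_sum_sq
    (((hU k).continuous.memLp_of_hasCompactSupport (hUc k)).sub (P k).memLp_u)

theorem AdmPair.exists_isSmoothApprox (hΩ : Bornology.IsBounded Ω) (hu : MemLp u 2)
    (hlim : Tendsto (fun k => ∫ x, ‖(P k).u x - u x‖ ^ 2) atTop (𝓝 0))
    (hM : ∀ k, l2Norm (P k).E Ω ≤ M) :
    ∃ (U : ℕ → VField n) (R : ℝ), IsSmoothApprox U u (fun k => (P k).E) Ω R := by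
  obtain ⟨U, hU, hUc, hUu, hUE⟩ := AdmPair.exists_contDiff_approx_seq hΩ P
  have hUL2 : ∀ k, MemLp (U k) 2 := fun k => (hU k).continuous.memLp_of_hasCompactSupport (hUc k)
  have hdiff : ∀ k S, L2MOn (fun x => symPart (fderiv ℝ (U k) x)) S := fun k S =>
    l2MOn_symPart_fderiv_of_contDiff (hU k) (hUc k)
  have hone : Tendsto (fun k : ℕ => 1 / ((k : ℝ) + 1)) atTop (𝓝 0) :=
    tendsto_one_div_add_atTop_nhds_zero_nat
  have hUlim : Tendsto (fun k => ∫ x, ‖U k x - u x‖ ^ 2) atTop (𝓝 0) := by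
    refine squeeze_zero (fun k => integral_nonneg fun x => sq_nonneg _) (fun k =>
      (integral_sq_norm_sub_le (hUL2 k) (P k).memLp_u hu).trans
        (add_le_add_left (mul_le_mul_of_nonneg_left (hUu k) zero_le_two) _)) ?_
    simpa using (hone.const_mul 2).add (hlim.const_mul 2)
  obtain ⟨B, hB⟩ := hUlim.bddAbove_range
  refine ⟨U, 2 * (2 * B + 2 * ∫ x, ‖u x‖ ^ 2) + 4 * n * (1 + M) ^ 2, hU, hUc, fun k => ?_, hu,
    hUlim, squeeze_zero (fun _ => l2Norm_nonneg) (fun k => ?_) hone⟩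
  · have hUk : ∫ x, ‖U k x‖ ^ 2 ≤ 2 * B + 2 * ∫ x, ‖u x‖ ^ 2 := by
      have h := integral_sq_norm_sub_le (h := fun _ => 0) (hUL2 k) hu MemLp.zero'
      simp only [sub_zero] at h
      linarith [hB ⟨k, rfl⟩]
    have hsymm : l2Norm (fun x => symPart (fderiv ℝ (U k) x)) Set.univ ≤ 1 + M :=
      ((hdiff k Set.univ).l2Norm_le_l2Norm_sub_add (P k).hE).trans <| add_le_add
        ((hUE k).trans (div_le_one_of_le₀ (by simp) (by positivity)))
        ((P k).l2Norm_E_univ.trans_le (hM k))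
    refine (integral_sq_jetNorm_le (hU k) (hUc k)).trans ?_
    have := l2Norm_nonneg (E := fun x => symPart (fderiv ℝ (U k) x)) (s := Set.univ)
    gcongr
  · exact (((hdiff k Set.univ).sub (P k).hE).l2Norm_mono (Set.subset_univ Ω)).trans (hUE k)

end ApproximatingSequence

section WeakL1Convergence

variable {n : ℕ} {Ω : Set (RV n)} {h : ℕ → RV n → ℝ} {f : RV n → ℝ} {c R : ℝ}

theorem weakL1_of_eventuallyUnifIntegrable (hΩ : IsOpen Ω) (hΩfin : volume Ω ≠ ⊤)
    (hh : EventuallyUnifIntegrable h atTop (volume.restrict Ω))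
    (hint : ∀ k, IntegrableOn (h k) Ω) (hR : ∀ k, ∫ x in Ω, |h k x| ≤ R)
    (hf : IntegrableOn f Ω)
    (htest : ∀ ψ : RV n → ℝ, ContDiff ℝ (⊤ : ℕ∞) ψ → HasCompactSupport ψ → tsupport ψ ⊆ Ω →
      Tendsto (fun k => ∫ x in Ω, ψ x * h k x) atTop (𝓝 (∫ x in Ω, ψ x * f x))) :
    WeakL1 h f Ω := by
  rintro g hg ⟨M, hgM⟩
  have hgM' : ∀ᵐ x, x ∈ Ω → |g x| ≤ |M| := hgM.mono fun x hx hxΩ => (hx hxΩ).trans (le_abs_self M)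
  refine tendsto_integral_mul_of_eventuallyUnifIntegrable hh hint hR hf hg.aestronglyMeasurable
    (abs_nonneg M) ((ae_restrict_iff' hΩ.measurableSet).2 hgM') fun ε hε => ?_
  obtain ⟨ψ, hψ, hψc, hψΩ, hψM, hψg⟩ :=
    exists_contDiff_approx_of_bounded hΩ hΩfin hg (abs_nonneg M) hgM' hε
  refine ⟨ψ, hψ.continuous.aestronglyMeasurable, ae_of_all _ hψM, hψg, ?_⟩
  simpa only [mul_comm] using htest ψ hψ hψc hψΩ

theorem WeakL1.of_add_const (hw : WeakL1 (fun k x => h k x + c) (fun x => f x + c) Ω)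
    (hΩ : MeasurableSet Ω) (hΩfin : volume Ω ≠ ⊤) (hint : ∀ k, IntegrableOn (h k) Ω)
    (hf : IntegrableOn f Ω) : WeakL1 h f Ω := by
  rintro g hg ⟨M, hgM⟩
  have hgM' : ∀ᵐ x ∂volume.restrict Ω, ‖g x‖ ≤ M := (ae_restrict_iff' hΩ).2 hgM
  have hsub : ∀ F : RV n → ℝ, IntegrableOn F Ω →
      (∫ x in Ω, (F x + c) * g x) - ∫ x in Ω, c * g x = ∫ x in Ω, F x * g x := fun F hF => by
    have hconst : IntegrableOn (fun _ => c) Ω := integrableOn_const hΩfin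
    have hFc : IntegrableOn (fun x => F x + c) Ω := hF.add hconst
    rw [← integral_sub (hFc.mul_bdd hg.aestronglyMeasurable hgM')
      (hconst.mul_bdd hg.aestronglyMeasurable hgM')]
    exact integral_congr_ae (ae_of_all _ fun x => by ring)
  simpa only [hsub _ (hint _), hsub f hf] using
    (hw g hg ⟨M, hgM⟩).sub (tendsto_const_nhds (x := ∫ x in Ω, c * g x))

theorem eventuallyUnifIntegrable_of_isCutoff (hΩ : IsOpen Ω) (hΩfin : volume Ω ≠ ⊤)
    (hint : ∀ k, IntegrableOn (h k) Ω) (hnonneg : ∀ k, ∀ᵐ x, x ∈ Ω → 0 ≤ h k x)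
    (hf : IntegrableOn f Ω)
    (hmass : Tendsto (fun k => ∫ x in Ω, h k x) atTop (𝓝 (∫ x in Ω, f x)))
    (htest : ∀ φ, IsCutoff φ Ω →
      Tendsto (fun k => ∫ x in Ω, φ x * h k x) atTop (𝓝 (∫ x in Ω, φ x * f x)))
    (hcut : ∀ φ, IsCutoff φ Ω →
      EventuallyUnifIntegrable (fun k x => φ x * h k x) atTop (volume.restrict Ω)) :
    EventuallyUnifIntegrable h atTop (volume.restrict Ω) := by
  refine eventuallyUnifIntegrable_of_cutoffs hint
    (fun k => (ae_restrict_iff' hΩ.measurableSet).2 (hnonneg k)) hmass fun ε hε => ?_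
  obtain ⟨φ, hφ, hφf⟩ := exists_isCutoff_setIntegral_sub_lt hΩ hΩfin hf hε
  exact ⟨φ, hφ.contDiff.continuous.aestronglyMeasurable, hφ.mem_Icc, hφf, htest φ hφ, hcut φ hφ⟩

variable {pk : ℕ → MField n} {p : MField n} {P : ℕ → AdmPair n Ω} {Q : AdmPair n Ω}
  {φ : RV n → ℝ}

theorem AdmPair.tendsto_integral_sq_norm_sub
    (hlim : Tendsto (fun k => ∫ x, ∑ i, ((P k).u x i - Q.u x i) ^ 2) atTop (𝓝 0)) :
    Tendsto (fun k => ∫ x, ‖(P k).u x - Q.u x‖ ^ 2) atTop (𝓝 0) :=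
  squeeze_zero (fun _ => integral_nonneg fun _ => sq_nonneg _)
    (fun k => integral_sq_norm_le_integral_sum_sq ((P k).memLp_u.sub Q.memLp_u)) hlim

theorem L2MOn.integrableOn_mdot_E (hp : L2MOn p Ω) (W : AdmPair n Ω) :
    IntegrableOn (fun x => mdot (p x) (W.E x)) Ω :=
  hp.integrableOn_mdot (W.hE.mono (Set.subset_univ Ω))

theorem Annihilates.setIntegral_mdot_add (hp : Annihilates Ω p) (hpL2 : L2MOn p Ω)
    (hΩfin : volume Ω ≠ ⊤) (W : AdmPair n Ω) :
    ∫ x in Ω, (mdot (p x) (W.E x) + c) = c * volume.real Ω := by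
  rw [integral_add (hpL2.integrableOn_mdot_E W) (integrableOn_const hΩfin), hp W, zero_add,
    setIntegral_const, smul_eq_mul, mul_comm]

theorem WeakL2M.tendsto_setIntegral_mul_mdot_add (hw : WeakL2M pk p Ω) (hΩ : MeasurableSet Ω)
    (hp : ∀ k, Annihilates Ω (pk k)) (hpkL2 : ∀ k, L2MOn (pk k) Ω) (hpL2 : L2MOn p Ω)
    (hu : Tendsto (fun k => ∫ x, ‖(P k).u x - Q.u x‖ ^ 2) atTop (𝓝 0))
    (hφ : ContDiff ℝ (⊤ : ℕ∞) φ) (hφc : HasCompactSupport φ) (hφΩ : tsupport φ ⊆ Ω) :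
    Tendsto (fun k => ∫ x in Ω, φ x * (mdot (pk k x) ((P k).E x) + c)) atTop
      (𝓝 (∫ x in Ω, φ x * (mdot (p x) (Q.E x) + c))) := by
  have hsplit : ∀ q, L2MOn q Ω → ∀ W : AdmPair n Ω,
      ∫ x in Ω, φ x * (mdot (q x) (W.E x) + c) =
        (∫ x in Ω, φ x * mdot (q x) (W.E x)) + ∫ x in Ω, φ x * c := fun q hq W => by
    simp only [mul_add]
    exact integral_add (hq.integrableOn_mul_mdot (W.hE.mono (Set.subset_univ Ω)) hφ.continuous hφc)
      ((hφ.continuous.integrable_of_hasCompactSupport hφc).mul_const c).integrableOn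
  simp only [hsplit _ (hpkL2 _), hsplit p hpL2]
  exact (hw.tendsto_setIntegral_mul_mdot hΩ hp hpkL2 hpL2 hu hφ hφc hφΩ).add_const _

theorem WeakL2M.eventuallyUnifIntegrable_mdot_add (hw : WeakL2M pk p Ω) (hΩ : IsOpen Ω)
    (hΩb : Bornology.IsBounded Ω) (hp : ∀ k, Annihilates Ω (pk k))
    (hpkL2 : ∀ k, L2MOn (pk k) Ω) (hpL2 : L2MOn p Ω)
    (hu : Tendsto (fun k => ∫ x, ‖(P k).u x - Q.u x‖ ^ 2) atTop (𝓝 0))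
    (hE : WeakL2M (fun k => (P k).E) Q.E Ω) (hc : 0 ≤ c)
    (hnonneg : ∀ k, ∀ᵐ x, x ∈ Ω → 0 ≤ mdot (pk k x) ((P k).E x) + c) :
    EventuallyUnifIntegrable (fun k x => mdot (pk k x) ((P k).E x) + c) atTop
      (volume.restrict Ω) := by
  have hΩfin : volume Ω ≠ ⊤ := hΩb.measure_lt_top.ne
  have hEL2 : ∀ W : AdmPair n Ω, L2MOn W.E Ω := fun W => W.hE.mono (Set.subset_univ Ω)
  have hint : ∀ q, L2MOn q Ω → ∀ W : AdmPair n Ω,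
      IntegrableOn (fun x => mdot (q x) (W.E x) + c) Ω := fun q hq W =>
    (hq.integrableOn_mdot_E W).add (integrableOn_const hΩfin)
  obtain ⟨Mp, hMp⟩ := hw.exists_l2Norm_le hpkL2 hpL2
  obtain ⟨ME, hME⟩ := hE.exists_l2Norm_le (fun k => hEL2 (P k)) (hEL2 Q)
  obtain ⟨U, R, hU⟩ := AdmPair.exists_isSmoothApprox hΩb Q.memLp_u hu hME
  refine eventuallyUnifIntegrable_of_isCutoff (f := fun x => mdot (p x) (Q.E x) + c) hΩ hΩfin
    (fun k => hint (pk k) (hpkL2 k) (P k)) hnonneg (hint p hpL2 Q) ?_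
    (fun φ hφ => hw.tendsto_setIntegral_mul_mdot_add hΩ.measurableSet hp hpkL2 hpL2 hu
      hφ.contDiff hφ.hasCompactSupport hφ.tsupport_subset)
    fun φ hφ => hU.eventuallyUnifIntegrable hΩ.measurableSet hΩb hp hpkL2 hMp
      (fun k => hEL2 (P k)) hc hnonneg hφ
  rw [(hw.annihilates hp).setIntegral_mdot_add hpL2 hΩfin Q]
  exact tendsto_const_nhds.congr fun k =>
    ((hp k).setIntegral_mdot_add (hpkL2 k) hΩfin (P k)).symm

end WeakL1Convergence

/-- Lemma on weak L¹ convergence of `pᵏ·ε(uᵏ)`. -/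
theorem statement1 {n : ℕ} (Ω : Set (RV n)) (hΩo : IsOpen Ω)
    (hΩb : Bornology.IsBounded Ω)
    (P : ℕ → AdmPair n Ω) (Q : AdmPair n Ω)
    (pk : ℕ → MField n) (p : MField n)
    (hpkL2 : ∀ k, L2MOn (pk k) Ω) (hpkS : ∀ k, SymOn (pk k) Ω)
    (hpL2 : L2MOn p Ω) (hpS : SymOn p Ω)
    -- (i) uᵏ → u strongly in L²(ℝⁿ; ℝⁿ)
    (hstrong : Tendsto (fun k => ∫ x, ∑ i, ((P k).u x i - Q.u x i) ^ 2) atTop (𝓝 0))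
    -- (ii) Eᵏ → E weakly in L²(Ω; Sym(n))
    (hEw : WeakL2M (fun k => (P k).E) Q.E Ω)
    -- (iii) each pᵏ annihilates all symmetrized gradients
    (hker : ∀ k, ∀ W : AdmPair n Ω, ∫ x in Ω, mdot (pk k x) (W.E x) = 0)
    -- (iv) pᵏ → p weakly in L²(Ω; Sym(n))
    (hpw : WeakL2M pk p Ω)
    -- (v) uniform lower bound
    (c : ℝ) (hc : 0 ≤ c)
    (hbelow : ∀ k, ∀ᵐ x ∂(volume : Measure (RV n)),
      x ∈ Ω → -c ≤ mdot (pk k x) ((P k).E x)) :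
    WeakL1 (fun k x => mdot (pk k x) ((P k).E x))
      (fun x => mdot (p x) (Q.E x)) Ω := by
  have hΩfin : volume Ω ≠ ⊤ := hΩb.measure_lt_top.ne
  have hnonneg : ∀ k, ∀ᵐ x, x ∈ Ω → 0 ≤ mdot (pk k x) ((P k).E x) + c := fun k =>
    (hbelow k).mono fun x hx hxΩ => neg_le_iff_add_nonneg.1 (hx hxΩ)
  have hint := fun k => (hpkL2 k).integrableOn_mdot_E (P k)
  have hmass : ∀ k, ∫ x in Ω, |mdot (pk k x) ((P k).E x) + c| = c * volume.real Ω := fun k => by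
    rw [← Annihilates.setIntegral_mdot_add (hker k) (hpkL2 k) hΩfin (P k)]
    exact setIntegral_congr_ae hΩo.measurableSet
      ((hnonneg k).mono fun x hx hxΩ => abs_of_nonneg (hx hxΩ))
  have hu := AdmPair.tendsto_integral_sq_norm_sub hstrong
  refine WeakL1.of_add_const (c := c) ?_ hΩo.measurableSet hΩfin hint (hpL2.integrableOn_mdot_E Q)
  exact weakL1_of_eventuallyUnifIntegrable hΩo hΩfin
    (hpw.eventuallyUnifIntegrable_mdot_add hΩo hΩb hker hpkL2 hpL2 hu hEw hc hnonneg)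
    (fun k => (hint k).add (integrableOn_const hΩfin)) (fun k => (hmass k).le)
    ((hpL2.integrableOn_mdot_E Q).add (integrableOn_const hΩfin))
    fun ψ hψ hψc hψΩ => hpw.tendsto_setIntegral_mul_mdot_add hΩo.measurableSet hker hpkL2 hpL2 hu
      hψ hψc hψΩ

end
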